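/- arXiv:2604.04755 — 8 statements merged into one kernel-verified Lean document; each statement's English description precedes it below -/
import Mathlib

section
/- Let K ≥ 1 be an integer and let S_1,…,S_K : {1,2,…} → ℝ be real sequences. Fix a_k > 0 and μ_k > 0 for each k ∈ {1,…,K}, and ε ∈ (0,1). Define T := inf{n ≥ 1 : S_k(n) ≥ a_k for all k ∈ {1,…,K}} (with T := ∞ if no such n exists) and, for each k, V_k := sup{n ≥ 1 : S_k(n)/n ≤ μ_k(1−ε)} + 1 (with the convention that the supremum of the empty set is 0, so V_k ≥ 1, and V_k := ∞ if the set is unbounded). Then, as elements of [0,∞], T ≤ (max_{1≤k≤K} a_k/μ_k)/(1−ε) + max_{1≤k≤K} V_k. -/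
open scoped ENNReal BigOperators

/-!
Put `c = max_k (a k / μ k) / (1 - ε)` and let `L` be the last time at which some `S k` has average
at most `μ k * (1 - ε)`. If `L` is finite, some integer `n` satisfies `c + L < n ≤ c + L + 1`. As
`n` lies beyond `L`, every `k` has `S k n > μ k * (1 - ε) * n`; as `n` lies beyond `c`, this is at
least `μ k * (1 - ε) * c ≥ a k`. Hence all thresholds are exceeded at time `n`.
-/

theorem exists_nat_gt_le_add_one_of_ne_top {x : ℝ≥0∞} (hx : x ≠ ∞) :
    ∃ n : ℕ, x < n ∧ (n : ℝ≥0∞) ≤ x + 1 := by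
  lift x to NNReal using hx
  refine ⟨⌊x⌋₊ + 1, ?_, ?_⟩
  · exact_mod_cast Nat.lt_floor_add_one x
  · exact_mod_cast add_le_add_left (Nat.floor_le x.2) 1

section PassageTimes

variable {ι : Type*} {S : ι → ℕ → ℝ} {a r : ι → ℝ} {n : ℕ}

/-- The first time `n ≥ 1` at which every sequence `S k` is at or above its threshold `a k`,
with value `∞` if there is none. The values `S k 0` play no role. -/
noncomputable def jointPassageTime (S : ι → ℕ → ℝ) (a : ι → ℝ) : ℝ≥0∞ :=
  sInf {t : ℝ≥0∞ | ∃ n : ℕ, 1 ≤ n ∧ t = n ∧ ∀ k, a k ≤ S k n}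

/-- The last time `n ≥ 1` at which the average `s n / n` is at most the rate `ρ`, with value `0`
if there is none and `∞` if there are arbitrarily late ones. -/
noncomputable def lastSlowTime (s : ℕ → ℝ) (ρ : ℝ) : ℝ≥0∞ :=
  sSup {t : ℝ≥0∞ | ∃ n : ℕ, 1 ≤ n ∧ t = n ∧ s n / n ≤ ρ}

theorem jointPassageTime_le (hn : 1 ≤ n) (h : ∀ k, a k ≤ S k n) : jointPassageTime S a ≤ n :=
  sInf_le ⟨n, hn, rfl, h⟩

theorem mul_lt_of_lastSlowTime_lt {s : ℕ → ℝ} {ρ : ℝ} (h : lastSlowTime s ρ < n) :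
    ρ * n < s n := by
  have hn : 0 < n := by exact_mod_cast pos_of_gt h
  rw [← lt_div_iff₀ (by exact_mod_cast hn)]
  by_contra! hslow
  exact h.not_ge (le_sSup ⟨n, hn, rfl, hslow⟩)

theorem jointPassageTime_le_add_iSup_lastSlowTime {c : ℝ} (hr : ∀ k, 0 ≤ r k)
    (hc : ∀ k, a k ≤ r k * c) :
    jointPassageTime S a ≤ ENNReal.ofReal c + ((⨆ k, lastSlowTime (S k) (r k)) + 1) := by
  set L := ⨆ k, lastSlowTime (S k) (r k)
  rcases eq_or_ne L ∞ with hL | hL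
  · simp [hL]
  have hcL : ENNReal.ofReal c + L ≠ ∞ := ENNReal.add_ne_top.2 ⟨ENNReal.ofReal_ne_top, hL⟩
  obtain ⟨n, hlt, hle⟩ := exists_nat_gt_le_add_one_of_ne_top hcL
  have hn : 1 ≤ n := by exact_mod_cast pos_of_gt hlt
  have hcn : c ≤ n := ENNReal.ofReal_le_natCast.1 (le_self_add.trans hlt.le)
  have hLn : L < n := le_add_self.trans_lt hlt
  have hpassed (k : ι) : a k ≤ S k n :=
    calc a k ≤ r k * c := hc k
      _ ≤ r k * n := mul_le_mul_of_nonneg_left hcn (hr k)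
      _ ≤ S k n := (mul_lt_of_lastSlowTime_lt ((le_iSup _ k).trans_lt hLn)).le
  exact (jointPassageTime_le hn hpassed).trans (hle.trans_eq (add_assoc _ _ _))

theorem stmt_1_general [Nonempty ι] {μ : ι → ℝ} {ε : ℝ}
    (hbdd : BddAbove (Set.range fun k => a k / μ k)) (hμ : ∀ k, 0 < μ k) (hε : ε < 1) :
    jointPassageTime S a ≤ ENNReal.ofReal ((⨆ k, a k / μ k) / (1 - ε)) +
      ⨆ k, (lastSlowTime (S k) (μ k * (1 - ε)) + 1) := by
  have hε' : 0 < 1 - ε := sub_pos.2 hε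
  rw [← ENNReal.iSup_add]
  refine jointPassageTime_le_add_iSup_lastSlowTime (fun k => (mul_pos (hμ k) hε').le) fun k => ?_
  rw [mul_assoc, mul_div_cancel₀ _ hε'.ne', ← div_le_iff₀' (hμ k)]
  exact le_ciSup hbdd k

end PassageTimes

/-- Deterministic bound: the first time `T` at which all sequences `S k` are
simultaneously above their thresholds `a k` is bounded by
`(max_k a k / μ k)/(1-ε)` plus the maximum over `k` of
`V k = sup{n ≥ 1 : S k n / n ≤ μ k (1-ε)} + 1`, everything in `[0,∞]`. -/
theorem stmt_1 (K : ℕ) (hK : 1 ≤ K) (S : Fin K → ℕ → ℝ)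
    (a μ : Fin K → ℝ) (ha : ∀ k, 0 < a k) (hμ : ∀ k, 0 < μ k)
    (ε : ℝ) (hε : ε ∈ Set.Ioo (0 : ℝ) 1) :
    let T : ℝ≥0∞ :=
      sInf {t : ℝ≥0∞ | ∃ n : ℕ, 1 ≤ n ∧ t = n ∧ ∀ k, a k ≤ S k n}
    let V : Fin K → ℝ≥0∞ := fun k =>
      sSup {t : ℝ≥0∞ | ∃ n : ℕ, 1 ≤ n ∧ t = n ∧ S k n / n ≤ μ k * (1 - ε)} + 1
    T ≤ ENNReal.ofReal ((⨆ k, a k / μ k) / (1 - ε)) + ⨆ k, V k := by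
  have : Nonempty (Fin K) := ⟨⟨0, hK⟩⟩
  exact stmt_1_general (Set.finite_range _).bddAbove hμ hε.2
end

section
/- Let ν be a σ-finite measure on a measurable space and let f and g be two ν-a.e. strictly positive probability densities with respect to ν such that I := ∫ g log(g/f) dν ∈ (0,∞). Let (X_n)_{n≥1} be i.i.d. random variables whose common distribution has density g with respect to ν, and set λ(n) := ∑_{m=1}^n log(g(X_m)/f(X_m)). Then for every real x < I, the random variable L := sup{n ≥ 1 : λ(n) ≤ n x} (with L := 0 if no such n exists) is almost surely finite and satisfies E[L^r] < ∞ for every real r ≥ 1. -/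
open MeasureTheory ProbabilityTheory
open scoped ENNReal BigOperators

/-!
Under the law with density `g`, the log-likelihood ratio `Y = log (g / f)` has mean `I`, and
`E[exp (-Y)] = ∫ f dν` is finite. Hence the moment generating function of `x - Y` is finite on
`[0, 1]` and has right derivative `x - I < 0` at `0`, so it takes a value `ρ < 1` at some `s > 0`.
Chernoff's bound gives `P (λ(n) ≤ n x) ≤ ρ ^ n`; Borel–Cantelli then makes `L` almost surely
finite, and `L ^ r ≤ ∑ₙ n ^ r 1{λ(n) ≤ n x}` has finite expectation.
-/

open Filter Topology Real

section LastTime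

variable {Ω : Type*}

/-- The last index `n ≥ 1` for which `ω` belongs to `A n`, as an extended nonnegative real: it is
`0` if there is no such index and `⊤` if there are infinitely many. -/
noncomputable def lastTime (A : ℕ → Set Ω) (ω : Ω) : ℝ≥0∞ :=
  sSup {t : ℝ≥0∞ | ∃ n : ℕ, 1 ≤ n ∧ t = n ∧ ω ∈ A n}

lemma lastTime_le_iff {A : ℕ → Set Ω} {ω : Ω} {b : ℝ≥0∞} :
    lastTime A ω ≤ b ↔ ∀ n : ℕ, ω ∈ A n → (n : ℝ≥0∞) ≤ b := by
  refine sSup_le_iff.trans ⟨fun h n hn => ?_, ?_⟩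
  · rcases n.eq_zero_or_pos with rfl | hpos
    · simp
    · exact h n ⟨n, hpos, rfl, hn⟩
  · rintro h _ ⟨n, -, rfl, hn⟩
    exact h n hn

lemma lastTime_lt_top_of_finite {A : ℕ → Set Ω} {ω : Ω} (h : {n | ω ∈ A n}.Finite) :
    lastTime A ω < ⊤ := by
  obtain ⟨b, hb⟩ := h.bddAbove
  exact (lastTime_le_iff.2 fun n hn => Nat.cast_le.2 (hb hn)).trans_lt (ENNReal.natCast_lt_top b)

lemma lastTime_rpow_le_tsum_indicator (A : ℕ → Set Ω) (ω : Ω) {r : ℝ} (hr : 0 < r) :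
    lastTime A ω ^ r ≤ ∑' n : ℕ, (A n).indicator (fun _ => (n : ℝ≥0∞) ^ r) ω := by
  refine (ENNReal.le_rpow_inv_iff hr).1 (lastTime_le_iff.2 fun n hn => ?_)
  rw [ENNReal.le_rpow_inv_iff hr]
  calc (n : ℝ≥0∞) ^ r = (A n).indicator (fun _ => (n : ℝ≥0∞) ^ r) ω := by
        rw [Set.indicator_of_mem hn]
    _ ≤ _ := ENNReal.le_tsum n

variable [MeasurableSpace Ω] {μ : Measure Ω} {A : ℕ → Set Ω}

lemma ae_lastTime_lt_top (h : ∑' n, μ (A n) ≠ ⊤) : ∀ᵐ ω ∂μ, lastTime A ω < ⊤ :=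
  (ae_finite_setOfPred_mem h).mono fun _ => lastTime_lt_top_of_finite

lemma lintegral_lastTime_rpow_le_tsum (hA : ∀ n, NullMeasurableSet (A n) μ) {r : ℝ} (hr : 0 < r) :
    ∫⁻ ω, lastTime A ω ^ r ∂μ ≤ ∑' n : ℕ, (n : ℝ≥0∞) ^ r * μ (A n) :=
  calc ∫⁻ ω, lastTime A ω ^ r ∂μ
      ≤ ∫⁻ ω, ∑' n : ℕ, (A n).indicator (fun _ => (n : ℝ≥0∞) ^ r) ω ∂μ :=
        lintegral_mono fun ω => lastTime_rpow_le_tsum_indicator A ω hr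
    _ = ∑' n : ℕ, ∫⁻ ω, (A n).indicator (fun _ => (n : ℝ≥0∞) ^ r) ω ∂μ :=
        lintegral_tsum fun n => aemeasurable_const.indicator₀ (hA n)
    _ = ∑' n : ℕ, (n : ℝ≥0∞) ^ r * μ (A n) :=
        tsum_congr fun n => lintegral_indicator_const₀ (hA n) _

end LastTime

section Geometric

lemma summable_rpow_mul_geometric (r : ℝ) {ρ : ℝ} (hρ : ‖ρ‖ < 1) :
    Summable fun n : ℕ => (n : ℝ) ^ r * ρ ^ n := by
  refine summable_of_isBigO_nat (summable_pow_mul_geometric_of_norm_lt_one ⌈r⌉₊ hρ)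
    (Asymptotics.IsBigO.mul ?_ (Asymptotics.isBigO_refl _ _))
  refine Asymptotics.IsBigO.of_bound 1 ?_
  filter_upwards [eventually_ge_atTop 1] with n hn
  rw [one_mul, norm_of_nonneg (by positivity), norm_of_nonneg (by positivity), ← rpow_natCast]
  exact rpow_le_rpow_of_exponent_le (mod_cast hn) (Nat.le_ceil r)

variable {Ω : Type*} [MeasurableSpace Ω] {μ : Measure Ω} [IsFiniteMeasure μ] {A : ℕ → Set Ω}

lemma tsum_rpow_mul_measure_lt_top_of_le_geometric {ρ : ℝ} (hρ : ρ < 1)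
    (hA : ∀ n, μ.real (A n) ≤ ρ ^ n) {r : ℝ} (hr : 0 ≤ r) :
    ∑' n : ℕ, (n : ℝ≥0∞) ^ r * μ (A n) < ⊤ := by
  have hρ0 : 0 ≤ ρ := by simpa using measureReal_nonneg.trans (hA 1)
  have hsum := summable_rpow_mul_geometric r ((norm_of_nonneg hρ0).trans_lt hρ)
  refine (ENNReal.tsum_le_tsum fun n => ?_).trans_lt hsum.tsum_ofReal_lt_top
  rw [ENNReal.ofReal_mul (by positivity), ← ENNReal.ofReal_rpow_of_nonneg n.cast_nonneg hr,
    ENNReal.ofReal_natCast, ← ofReal_measureReal]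
  gcongr
  exact hA n

end Geometric

section Chernoff

variable {Ω : Type*} [MeasurableSpace Ω] {μ : Measure Ω}

lemma hasDerivAt_exp_mul_zero (y : ℝ) : HasDerivAt (fun u => exp (u * y)) y 0 := by
  simpa using ((hasDerivAt_id (0 : ℝ)).mul_const y).exp

-- By convexity, the slope lies between the derivative `y` at `0` and the slope up to `t`.
lemma abs_slope_exp_mul_zero_le {s t : ℝ} (hs : 0 < s) (hst : s ≤ t) (y : ℝ) :
    |slope (fun u => exp (u * y)) 0 s| ≤ max |y| |slope (fun u => exp (u * y)) 0 t| := by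
  have hconv : ConvexOn ℝ Set.univ fun u => exp (u * y) :=
    convexOn_exp.comp_linearMap (LinearMap.mulRight ℝ y)
  refine abs_le_max_abs_abs (hconv.le_slope_of_hasDerivAt trivial trivial hs
    (hasDerivAt_exp_mul_zero y)) ?_
  exact hconv.slope_mono trivial ⟨trivial, hs.ne'⟩ ⟨trivial, (hs.trans_le hst).ne'⟩ hst

lemma integrable_slope_exp_mul_zero [IsFiniteMeasure μ] {X : Ω → ℝ} {s : ℝ}
    (h : Integrable (fun ω => exp (s * X ω)) μ) :
    Integrable (fun ω => slope (fun u => exp (u * X ω)) 0 s) μ := by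
  simp only [slope_def_module, zero_mul, exp_zero]
  exact (h.sub (integrable_const 1)).smul (s - 0)⁻¹

lemma slope_mgf_zero [IsFiniteMeasure μ] {X : Ω → ℝ} {s : ℝ}
    (h : Integrable (fun ω => exp (s * X ω)) μ) :
    slope (mgf X μ) 0 s = ∫ ω, slope (fun u => exp (u * X ω)) 0 s ∂μ := by
  simp only [slope_def_module, mgf, smul_eq_mul, zero_mul, exp_zero]
  rw [integral_const_mul, integral_sub h (integrable_const 1)]

lemma hasDerivWithinAt_mgf_zero_right [IsFiniteMeasure μ] {X : Ω → ℝ} {t : ℝ} (ht : 0 < t)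
    (hX : Integrable X μ) (hexp : Integrable (fun ω => exp (t * X ω)) μ) :
    HasDerivWithinAt (mgf X μ) μ[X] (Set.Ioi 0) 0 := by
  rw [hasDerivWithinAt_iff_tendsto_slope' Set.self_notMem_Ioi]
  have hexp_near : ∀ᶠ s in 𝓝[>] (0 : ℝ), Integrable (fun ω => exp (s * X ω)) μ := by
    filter_upwards [Ioc_mem_nhdsGT ht] with s hs
    exact integrable_exp_mul_of_nonneg_of_le hexp hs.1.le hs.2
  have hlim : Tendsto (fun s => ∫ ω, slope (fun u => exp (u * X ω)) 0 s ∂μ) (𝓝[>] 0)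
      (𝓝 μ[X]) := by
    refine tendsto_integral_filter_of_dominated_convergence
      (fun ω => max |X ω| |slope (fun u => exp (u * X ω)) 0 t|)
      (hexp_near.mono fun s hs => (integrable_slope_exp_mul_zero hs).aestronglyMeasurable) ?_
      (hX.abs.sup (integrable_slope_exp_mul_zero hexp).abs) (Eventually.of_forall fun ω => ?_)
    · filter_upwards [Ioc_mem_nhdsGT ht] with s hs
      exact Eventually.of_forall fun ω => abs_slope_exp_mul_zero_le hs.1 hs.2 (X ω)
    · rw [← hasDerivWithinAt_iff_tendsto_slope' Set.self_notMem_Ioi]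
      exact (hasDerivAt_exp_mul_zero (X ω)).hasDerivWithinAt
  exact hlim.congr' (hexp_near.mono fun s hs => (slope_mgf_zero hs).symm)

lemma exists_mgf_lt_one_of_integral_neg [IsProbabilityMeasure μ] {X : Ω → ℝ} {t : ℝ} (ht : 0 < t)
    (hX : Integrable X μ) (hexp : Integrable (fun ω => exp (t * X ω)) μ) (hneg : μ[X] < 0) :
    ∃ s, 0 < s ∧ Integrable (fun ω => exp (s * X ω)) μ ∧ mgf X μ s < 1 := by
  have hslope := (hasDerivWithinAt_iff_tendsto_slope' Set.self_notMem_Ioi).1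
    (hasDerivWithinAt_mgf_zero_right ht hX hexp)
  obtain ⟨s, hs_neg, hs⟩ :=
    ((hslope.eventually_lt_const hneg).and (Ioc_mem_nhdsGT ht)).exists
  refine ⟨s, hs.1, integrable_exp_mul_of_nonneg_of_le hexp hs.1.le hs.2, ?_⟩
  rw [slope_def_field, mgf_zero, sub_zero, div_lt_iff₀ hs.1, zero_mul] at hs_neg
  exact sub_neg.1 hs_neg

lemma measureReal_nonneg_sum_le_mgf_pow {Z : ℕ → Ω → ℝ} (hindep : iIndepFun Z μ)
    (hident : ∀ n, IdentDistrib (Z n) (Z 0) μ μ) {s : ℝ} (hs : 0 ≤ s)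
    (hexp : Integrable (fun ω => exp (s * Z 0 ω)) μ) (n : ℕ) :
    μ.real {ω | 0 ≤ ∑ m ∈ Finset.range n, Z m ω} ≤ mgf (Z 0) μ s ^ n := by
  have := hindep.isProbabilityMeasure
  have hmgf : mgf (∑ m ∈ Finset.range n, Z m) μ s = mgf (Z 0) μ s ^ n := by
    rw [hindep.mgf_sum₀ fun m => (hident m).aemeasurable_fst,
      Finset.prod_congr rfl fun m _ => congrFun (mgf_congr_identDistrib (hident m)) s,
      Finset.prod_const, Finset.card_range]
  have hint : Integrable (fun ω => exp (s * (∑ m ∈ Finset.range n, Z m) ω)) μ :=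
    mgf_pos_iff.1 (hmgf ▸ pow_pos (mgf_pos hexp) n)
  simpa [hmgf] using measure_ge_le_exp_mul_mgf 0 hs hint

lemma exists_measureReal_sum_le_le_geometric {Y : ℕ → Ω → ℝ} (hindep : iIndepFun Y μ)
    (hident : ∀ n, IdentDistrib (Y n) (Y 0) μ μ) (hint : Integrable (Y 0) μ) {θ : ℝ} (hθ : 0 < θ)
    (hexp : Integrable (fun ω => exp (-θ * Y 0 ω)) μ) {x : ℝ} (hx : x < μ[Y 0]) :
    ∃ ρ < 1, ∀ n : ℕ, μ.real {ω | ∑ m ∈ Finset.range n, Y m ω ≤ n * x} ≤ ρ ^ n := by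
  have := hindep.isProbabilityMeasure
  have hsub : Measurable fun y : ℝ => x - y := by fun_prop
  have hexp_sub : Integrable (fun ω => exp (θ * (x - Y 0 ω))) μ := by
    refine (hexp.const_mul (exp (θ * x))).congr (Eventually.of_forall fun ω => ?_)
    simp only [← exp_add]
    ring_nf
  have hdrift : ∫ ω, (x - Y 0 ω) ∂μ < 0 := by
    rw [integral_sub (integrable_const x) hint, integral_const, probReal_univ, one_smul]
    exact sub_neg.2 hx
  obtain ⟨s, hs, hs_int, hs_lt⟩ :=
    exists_mgf_lt_one_of_integral_neg hθ ((integrable_const x).sub hint) hexp_sub hdrift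
  refine ⟨mgf (fun ω => x - Y 0 ω) μ s, hs_lt, fun n => ?_⟩
  have htail : μ.real {ω | 0 ≤ ∑ m ∈ Finset.range n, (x - Y m ω)} ≤
      mgf (fun ω => x - Y 0 ω) μ s ^ n :=
    measureReal_nonneg_sum_le_mgf_pow (hindep.comp (fun _ y => x - y) fun _ => hsub)
      (fun m => (hident m).comp hsub) hs.le hs_int n
  simpa only [Finset.sum_sub_distrib, Finset.sum_const, Finset.card_range, nsmul_eq_mul,
    sub_nonneg] using htail

end Chernoff

section Density

variable {E : Type*} [MeasurableSpace E] {ν : Measure E} {f g : E → ℝ}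
  {F : Type*} [NormedAddCommGroup F] [NormedSpace ℝ F] {φ : E → F}

lemma integrable_withDensity_ofReal_iff (hg : Measurable g) (hg0 : 0 ≤ᵐ[ν] g) :
    Integrable φ (ν.withDensity fun t => ENNReal.ofReal (g t)) ↔
      Integrable (fun t => g t • φ t) ν := by
  rw [integrable_withDensity_iff_integrable_smul' hg.ennreal_ofReal (by simp)]
  refine integrable_congr (hg0.mono fun t ht => ?_)
  simp only [ENNReal.toReal_ofReal ht]

lemma integral_withDensity_ofReal (hg : Measurable g) (hg0 : 0 ≤ᵐ[ν] g) :
    ∫ t, φ t ∂ν.withDensity (fun t => ENNReal.ofReal (g t)) = ∫ t, g t • φ t ∂ν := by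
  rw [integral_withDensity_eq_integral_toReal_smul hg.ennreal_ofReal (by simp)]
  refine integral_congr_ae (hg0.mono fun t ht => ?_)
  simp only [ENNReal.toReal_ofReal ht]

lemma integrable_exp_neg_log_div_withDensity (hg : Measurable g) (hgpos : ∀ᵐ t ∂ν, 0 < g t)
    (hfpos : ∀ᵐ t ∂ν, 0 < f t) (hf : Integrable f ν) :
    Integrable (fun t => exp (-log (g t / f t))) (ν.withDensity fun t => ENNReal.ofReal (g t)) := by
  rw [integrable_withDensity_ofReal_iff hg (hgpos.mono fun _ => le_of_lt)]
  refine hf.congr ?_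
  filter_upwards [hgpos, hfpos] with t hgt hft
  rw [smul_eq_mul, exp_neg, exp_log (div_pos hgt hft), inv_div, mul_div_cancel₀ _ hgt.ne']

end Density

theorem stmt_3_general {Ω : Type*} [MeasurableSpace Ω] {P : Measure Ω} {Y : ℕ → Ω → ℝ}
    (hindep : iIndepFun Y P) (hident : ∀ n, IdentDistrib (Y n) (Y 0) P P)
    (hint : Integrable (Y 0) P) {θ : ℝ} (hθ : 0 < θ)
    (hexp : Integrable (fun ω => exp (-θ * Y 0 ω)) P) {x : ℝ} (hx : x < P[Y 0]) :
    let L := lastTime fun n => {ω | ∑ m ∈ Finset.range n, Y m ω ≤ n * x}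
    (∀ᵐ ω ∂P, L ω < ⊤) ∧ ∀ r : ℝ, 0 < r → ∫⁻ ω, L ω ^ r ∂P < ⊤ := by
  have := hindep.isProbabilityMeasure
  obtain ⟨ρ, hρ, htail⟩ := exists_measureReal_sum_le_le_geometric hindep hident hint hθ hexp hx
  have hnull (n : ℕ) : NullMeasurableSet {ω | ∑ m ∈ Finset.range n, Y m ω ≤ n * x} P :=
    nullMeasurableSet_le
      (Finset.aemeasurable_fun_sum _ fun m _ => (hident m).aemeasurable_fst) aemeasurable_const
  have hsum {r : ℝ} (hr : 0 ≤ r) := tsum_rpow_mul_measure_lt_top_of_le_geometric hρ htail hr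
  refine ⟨ae_lastTime_lt_top ?_, fun r hr =>
    (lintegral_lastTime_rpow_le_tsum hnull hr).trans_lt (hsum hr.le)⟩
  simpa using (hsum le_rfl).ne

/-- If `(X n)` are i.i.d. with density `g` with respect to `ν` and
`I = ∫ g log(g/f) dν ∈ (0,∞)`, then for every `x < I` the last time
`L = sup{n ≥ 1 : λ(n) ≤ n x}` (with `L = 0` if no such `n` exists) is
almost surely finite and has finite moments of every order `r ≥ 1`. -/
theorem stmt_3
    {Ω : Type*} [MeasurableSpace Ω] (P : Measure Ω) [IsProbabilityMeasure P]
    {E : Type*} [mE : MeasurableSpace E] (ν : Measure E) [SigmaFinite ν]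
    (f g : E → ℝ) (hf : Measurable f) (hg : Measurable g)
    (hfpos : ∀ᵐ t ∂ν, 0 < f t) (hgpos : ∀ᵐ t ∂ν, 0 < g t)
    (hfprob : ∫ t, f t ∂ν = 1) (hgprob : ∫ t, g t ∂ν = 1)
    (hI_int : Integrable (fun t => g t * Real.log (g t / f t)) ν)
    (hI_pos : 0 < ∫ t, g t * Real.log (g t / f t) ∂ν)
    (X : ℕ → Ω → E) (hX : ∀ n, Measurable (X n))
    (hindep : iIndepFun X P)
    (hdist : ∀ n, P.map (X n) = ν.withDensity fun t => ENNReal.ofReal (g t))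
    (x : ℝ) (hx : x < ∫ t, g t * Real.log (g t / f t) ∂ν) :
    let L : Ω → ℝ≥0∞ := fun ω =>
      sSup {t : ℝ≥0∞ | ∃ n : ℕ, 1 ≤ n ∧ t = n ∧
        ∑ m ∈ Finset.range n, Real.log (g (X m ω) / f (X m ω)) ≤ n * x}
    (∀ᵐ ω ∂P, L ω < ⊤) ∧ ∀ r : ℝ, 1 ≤ r → ∫⁻ ω, L ω ^ r ∂P < ⊤ := by
  have hg0 : 0 ≤ᵐ[ν] g := hgpos.mono fun _ => le_of_lt
  have hφ : Measurable fun t => Real.log (g t / f t) := by fun_prop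
  have hlaw (n : ℕ) : HasLaw (X n) (ν.withDensity fun t => ENNReal.ofReal (g t)) P :=
    ⟨(hX n).aemeasurable, hdist n⟩
  have hint := (integrable_withDensity_ofReal_iff hg hg0).2 hI_int
  have hexp := integrable_exp_neg_log_div_withDensity hg hgpos hfpos
    (integrable_of_integral_eq_one hfprob)
  replace hx := hx.trans_eq (integral_withDensity_ofReal hg hg0).symm
  rw [← hdist 0] at hint hexp hx
  rw [integral_map (hX 0).aemeasurable hφ.aestronglyMeasurable] at hx
  have hL := stmt_3_general (hindep.comp (fun _ => _) fun _ => hφ)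
    (fun n => ((hlaw n).identDistrib (hlaw 0)).comp hφ) (hint.comp_measurable (hX 0)) one_pos
    (by simpa [Function.comp_def] using hexp.comp_measurable (hX 0)) hx
  exact ⟨hL.1, fun r hr => hL.2 r (one_pos.trans_le hr)⟩
end

section
/- Let ν be a σ-finite measure on a measurable space and let f and g be two ν-a.e. strictly positive probability densities with respect to ν, and set I := ∫ g log(g/f) dν and J := ∫ f log(f/g) dν. Let (X_n)_{n≥1} be i.i.d. random variables, set λ(n) := ∑_{m=1}^n log(g(X_m)/f(X_m)), and for thresholds a, b > 0 define the SPRT stopping time T := inf{n ≥ 1 : λ(n) ∉ (−b, a)}. If I ∈ (0,∞), then T is almost surely finite when the common density of the X_n is g; if J ∈ (0,∞), then T is almost surely finite when the common density of the X_n is f. -/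
open MeasureTheory ProbabilityTheory
open scoped ENNReal BigOperators

/-!
Under density `g` the increments `log (g / f)` of the log-likelihood ratio are i.i.d. with positive
mean `I`, so by the strong law of large numbers `λ(n) / n → I` and hence `λ(n) → ∞` almost surely.
Exchanging `f` and `g` turns `λ` into `-λ`, so under density `f` one gets `λ(n) → -∞`. Either way
`λ` leaves the bounded interval `(-b, a)`.
-/

open Filter Function
open scoped Topology

theorem tendsto_atTop_of_tendsto_div_natCast {u : ℕ → ℝ} {c : ℝ} (hc : 0 < c)
    (hu : Tendsto (fun n : ℕ => u n / n) atTop (𝓝 c)) : Tendsto u atTop atTop := by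
  refine (hu.pos_mul_atTop hc tendsto_natCast_atTop_atTop).congr' ?_
  filter_upwards [eventually_ne_atTop 0] with n hn
  exact div_mul_cancel₀ _ (Nat.cast_ne_zero.2 hn)

theorem exists_one_le_notMem_of_tendsto_cobounded {α : Type*} [Bornology α] {u : ℕ → α}
    (hu : Tendsto u atTop (Bornology.cobounded α)) {s : Set α} (hs : Bornology.IsBounded s) :
    ∃ n, 1 ≤ n ∧ u n ∉ s :=
  ((eventually_ge_atTop 1).and (hu.eventually (Bornology.isBounded_def.1 hs))).exists

section WithDensity

variable {E F : Type*} [MeasurableSpace E] [NormedAddCommGroup F] [NormedSpace ℝ F]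
  {ν : Measure E} {p : E → ℝ}

theorem ofReal_toReal_smul_ae_eq (hp0 : 0 ≤ᵐ[ν] p) (h : E → F) :
    (fun t => (ENNReal.ofReal (p t)).toReal • h t) =ᵐ[ν] fun t => p t • h t := by
  filter_upwards [hp0] with t ht
  rw [ENNReal.toReal_ofReal ht]

theorem integrable_withDensity_ofReal_iff_s5 (hp : AEMeasurable p ν) (hp0 : 0 ≤ᵐ[ν] p) {h : E → F} :
    Integrable h (ν.withDensity fun t => ENNReal.ofReal (p t)) ↔
      Integrable (fun t => p t • h t) ν := by
  rw [integrable_withDensity_iff_integrable_smul₀' hp.ennreal_ofReal (by simp)]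
  exact integrable_congr (ofReal_toReal_smul_ae_eq hp0 h)

theorem integral_withDensity_ofReal_s5 (hp : AEMeasurable p ν) (hp0 : 0 ≤ᵐ[ν] p) (h : E → F) :
    ∫ t, h t ∂ν.withDensity (fun t => ENNReal.ofReal (p t)) = ∫ t, p t • h t ∂ν := by
  rw [integral_withDensity_eq_integral_toReal_smul₀ hp.ennreal_ofReal (by simp)]
  exact integral_congr_ae (ofReal_toReal_smul_ae_eq hp0 h)

end WithDensity

section RandomWalk

variable {Ω E : Type*} [MeasurableSpace Ω] [MeasurableSpace E] {P : Measure Ω}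

theorem ae_tendsto_sum_atTop_of_integral_pos {Y : ℕ → Ω → ℝ} (hint : Integrable (Y 0) P)
    (hindep : Pairwise ((· ⟂ᵢ[P] ·) on Y)) (hident : ∀ n, IdentDistrib (Y n) (Y 0) P P)
    (hpos : 0 < ∫ ω, Y 0 ω ∂P) :
    ∀ᵐ ω ∂P, Tendsto (fun n => ∑ m ∈ Finset.range n, Y m ω) atTop atTop := by
  filter_upwards [strong_law_ae_real Y hint hindep hident] with ω hω
  exact tendsto_atTop_of_tendsto_div_natCast hpos hω

theorem ae_tendsto_sum_comp_atTop_of_integral_pos {X : ℕ → Ω → E} {μ : Measure E} {h : E → ℝ}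
    (hX : ∀ n, AEMeasurable (X n) P) (hindep : Pairwise ((· ⟂ᵢ[P] ·) on X))
    (hlaw : ∀ n, P.map (X n) = μ) (hint : Integrable h μ) (hpos : 0 < ∫ t, h t ∂μ) :
    ∀ᵐ ω ∂P, Tendsto (fun n => ∑ m ∈ Finset.range n, h (X m ω)) atTop atTop := by
  have hint_map (n : ℕ) : Integrable h (P.map (X n)) := by rwa [hlaw n]
  have hmeas (n : ℕ) : AEMeasurable h (P.map (X n)) := (hint_map n).aemeasurable
  have hident (n : ℕ) : IdentDistrib (X n) (X 0) P P := ⟨hX n, hX 0, by rw [hlaw, hlaw]⟩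
  have hmean : ∫ ω, h (X 0 ω) ∂P = ∫ t, h t ∂μ := by
    rw [← hlaw 0, integral_map (hX 0) (hint_map 0).aestronglyMeasurable]
  exact ae_tendsto_sum_atTop_of_integral_pos (Y := fun n => h ∘ X n)
    ((hint_map 0).comp_aemeasurable (hX 0))
    (fun i j hij => (hindep hij).comp₀ (hX i) (hX j) (hmeas i) (hmeas j))
    (fun n => (hident n).comp_of_aemeasurable (hmeas n)) (hmean ▸ hpos)

end RandomWalk

section LogLikelihoodRatio

variable {Ω E : Type*}

/-- The log-likelihood ratio `λ(n)` of the density `p` against the density `q` based on the first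
`n` observations, which are `X 0, …, X (n - 1)`. -/
noncomputable def logLikelihoodRatio (p q : E → ℝ) (X : ℕ → Ω → E) (n : ℕ) (ω : Ω) : ℝ :=
  ∑ m ∈ Finset.range n, Real.log (p (X m ω) / q (X m ω))

theorem neg_logLikelihoodRatio (p q : E → ℝ) (X : ℕ → Ω → E) (n : ℕ) (ω : Ω) :
    -logLikelihoodRatio p q X n ω = logLikelihoodRatio q p X n ω := by
  simp only [logLikelihoodRatio, ← Finset.sum_neg_distrib, ← Real.log_inv, inv_div]

variable [MeasurableSpace Ω] [MeasurableSpace E]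

section OneDensity

variable {P : Measure Ω} {ν : Measure E} {p q : E → ℝ} {X : ℕ → Ω → E}

theorem ae_tendsto_logLikelihoodRatio_atTop (hp : AEMeasurable p ν) (hp0 : 0 ≤ᵐ[ν] p)
    (hX : ∀ n, AEMeasurable (X n) P) (hindep : Pairwise ((· ⟂ᵢ[P] ·) on X))
    (hlaw : ∀ n, P.map (X n) = ν.withDensity fun t => ENNReal.ofReal (p t))
    (hint : Integrable (fun t => p t * Real.log (p t / q t)) ν)
    (hpos : 0 < ∫ t, p t * Real.log (p t / q t) ∂ν) :
    ∀ᵐ ω ∂P, Tendsto (fun n => logLikelihoodRatio p q X n ω) atTop atTop := by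
  refine ae_tendsto_sum_comp_atTop_of_integral_pos (h := fun t => Real.log (p t / q t))
    hX hindep hlaw ?_ ?_
  · exact (integrable_withDensity_ofReal_iff_s5 hp hp0).2 hint
  · rwa [integral_withDensity_ofReal_s5 hp hp0]

theorem ae_tendsto_logLikelihoodRatio_atBot (hp : AEMeasurable p ν) (hp0 : 0 ≤ᵐ[ν] p)
    (hX : ∀ n, AEMeasurable (X n) P) (hindep : Pairwise ((· ⟂ᵢ[P] ·) on X))
    (hlaw : ∀ n, P.map (X n) = ν.withDensity fun t => ENNReal.ofReal (p t))
    (hint : Integrable (fun t => p t * Real.log (p t / q t)) ν)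
    (hpos : 0 < ∫ t, p t * Real.log (p t / q t) ∂ν) :
    ∀ᵐ ω ∂P, Tendsto (fun n => logLikelihoodRatio q p X n ω) atTop atBot := by
  filter_upwards [ae_tendsto_logLikelihoodRatio_atTop hp hp0 hX hindep hlaw hint hpos] with ω hω
  simpa only [comp_def, neg_logLikelihoodRatio] using tendsto_neg_atTop_atBot.comp hω

end OneDensity

theorem stmt_5_general {Pf Pg : Measure Ω} {ν : Measure E} {f g : E → ℝ}
    (hf : AEMeasurable f ν) (hg : AEMeasurable g ν)
    (hfpos : ∀ᵐ t ∂ν, 0 < f t) (hgpos : ∀ᵐ t ∂ν, 0 < g t) {X : ℕ → Ω → E}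
    (hXf : ∀ n, AEMeasurable (X n) Pf) (hXg : ∀ n, AEMeasurable (X n) Pg)
    (hindep_f : Pairwise ((· ⟂ᵢ[Pf] ·) on X))
    (hdist_f : ∀ n, Pf.map (X n) = ν.withDensity fun t => ENNReal.ofReal (f t))
    (hindep_g : Pairwise ((· ⟂ᵢ[Pg] ·) on X))
    (hdist_g : ∀ n, Pg.map (X n) = ν.withDensity fun t => ENNReal.ofReal (g t))
    {s : Set ℝ} (hs : Bornology.IsBounded s) :
    ((Integrable (fun t => g t * Real.log (g t / f t)) ν ∧
        0 < ∫ t, g t * Real.log (g t / f t) ∂ν) →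
      ∀ᵐ ω ∂Pg, ∃ n, 1 ≤ n ∧ logLikelihoodRatio g f X n ω ∉ s) ∧
    ((Integrable (fun t => f t * Real.log (f t / g t)) ν ∧
        0 < ∫ t, f t * Real.log (f t / g t) ∂ν) →
      ∀ᵐ ω ∂Pf, ∃ n, 1 ≤ n ∧ logLikelihoodRatio g f X n ω ∉ s) := by
  refine ⟨fun ⟨hint, hpos⟩ => ?_, fun ⟨hint, hpos⟩ => ?_⟩
  · filter_upwards [ae_tendsto_logLikelihoodRatio_atTop hg (hgpos.mono fun _ => le_of_lt) hXg
      hindep_g hdist_g hint hpos] with ω hω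
    exact exists_one_le_notMem_of_tendsto_cobounded
      (hω.mono_right IsOrderBornology.atTop_le_cobounded) hs
  · filter_upwards [ae_tendsto_logLikelihoodRatio_atBot hf (hfpos.mono fun _ => le_of_lt) hXf
      hindep_f hdist_f hint hpos] with ω hω
    exact exists_one_le_notMem_of_tendsto_cobounded
      (hω.mono_right IsOrderBornology.atBot_le_cobounded) hs

end LogLikelihoodRatio

/-- Almost sure finiteness of the SPRT stopping time
`T = inf{n ≥ 1 : λ(n) ∉ (-b, a)}`: if `I = ∫ g log(g/f) dν ∈ (0,∞)` then `T` is
a.s. finite under the measure `Pg` making the `X n` i.i.d. with density `g`, and if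
`J = ∫ f log(f/g) dν ∈ (0,∞)` then `T` is a.s. finite under the measure `Pf`
making the `X n` i.i.d. with density `f`. -/
theorem stmt_5
    {Ω : Type*} [MeasurableSpace Ω] (Pf Pg : Measure Ω)
    [IsProbabilityMeasure Pf] [IsProbabilityMeasure Pg]
    {E : Type*} [mE : MeasurableSpace E] (ν : Measure E) [SigmaFinite ν]
    (f g : E → ℝ) (hf : Measurable f) (hg : Measurable g)
    (hfpos : ∀ᵐ t ∂ν, 0 < f t) (hgpos : ∀ᵐ t ∂ν, 0 < g t)
    (hfprob : ∫ t, f t ∂ν = 1) (hgprob : ∫ t, g t ∂ν = 1)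
    (X : ℕ → Ω → E) (hX : ∀ n, Measurable (X n))
    (hindep_f : iIndepFun (m := fun _ => mE) X Pf)
    (hdist_f : ∀ n, Pf.map (X n) = ν.withDensity fun t => ENNReal.ofReal (f t))
    (hindep_g : iIndepFun (m := fun _ => mE) X Pg)
    (hdist_g : ∀ n, Pg.map (X n) = ν.withDensity fun t => ENNReal.ofReal (g t))
    (a b : ℝ) (ha : 0 < a) (hb : 0 < b) :
    let lam : ℕ → Ω → ℝ := fun n ω =>
      ∑ m ∈ Finset.range n, Real.log (g (X m ω) / f (X m ω))
    ((Integrable (fun t => g t * Real.log (g t / f t)) ν ∧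
        0 < ∫ t, g t * Real.log (g t / f t) ∂ν) →
      ∀ᵐ ω ∂Pg, ∃ n : ℕ, 1 ≤ n ∧ lam n ω ∉ Set.Ioo (-b) a) ∧
    ((Integrable (fun t => f t * Real.log (f t / g t)) ν ∧
        0 < ∫ t, f t * Real.log (f t / g t) ∂ν) →
      ∀ᵐ ω ∂Pf, ∃ n : ℕ, 1 ≤ n ∧ lam n ω ∉ Set.Ioo (-b) a) := by
  have hX_ae {P : Measure Ω} (n : ℕ) : AEMeasurable (X n) P := (hX n).aemeasurable
  exact stmt_5_general hf.aemeasurable hg.aemeasurable hfpos hgpos hX_ae hX_ae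
    (fun _ _ => hindep_f.indepFun) hdist_f (fun _ _ => hindep_g.indepFun) hdist_g
    (Metric.isBounded_Ioo (-b) a)
end

section
/- Let ν be a σ-finite measure on a measurable space and let f and g be two ν-a.e. strictly positive probability densities with respect to ν. Let (X_n)_{n≥1} be i.i.d. random variables, set λ(n) := ∑_{m=1}^n log(g(X_m)/f(X_m)), and for thresholds a, b > 0 define the SPRT stopping time T := inf{n ≥ 1 : λ(n) ∉ (−b, a)}. Then P_f(T < ∞ and λ(T) ≥ a) ≤ e^{−a}, and P_g(T < ∞ and λ(T) ≤ −b) ≤ e^{−b}. -/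
open MeasureTheory ProbabilityTheory
open scoped ENNReal BigOperators

/-!
Under `Pf` the likelihood ratio `exp (λ n) = ∏ m < n, g (X m) / f (X m)` is a nonnegative martingale
of mean one, since `∫ (g / f) f dν = ∫ g dν = 1`. Doob's maximal inequality, with the horizon sent
to infinity, bounds the probability that it ever reaches `exp a` by `exp (-a)`; this contains the
event of a first exit through the upper boundary. Exchanging `f` and `g` replaces `λ` by `-λ`, and
the same bound controls the exit through the lower boundary under `Pg`.
-/

section Maximal

open scoped NNReal

variable {Ω : Type*} {mΩ : MeasurableSpace Ω} {μ : Measure Ω}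

theorem mul_measure_exists_le_of_submartingale [IsFiniteMeasure μ] {𝒢 : Filtration ℕ mΩ}
    {M : ℕ → Ω → ℝ} (hM : Submartingale M 𝒢 μ) (hM_nonneg : 0 ≤ M) {C : ℝ}
    (hC : ∀ n, μ[M n] ≤ C) (ε : ℝ≥0) :
    ε * μ {ω | ∃ n, ε ≤ M n ω} ≤ ENNReal.ofReal C := by
  let runningMax (n : ℕ) (ω : Ω) : ℝ :=
    (Finset.range (n + 1)).sup' Finset.nonempty_range_add_one fun k ↦ M k ω
  have le_runningMax_iff (n : ℕ) (ω : Ω) : ε ≤ runningMax n ω ↔ ∃ k ≤ n, ε ≤ M k ω := by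
    simp [runningMax, Finset.le_sup'_iff]
  have event_eq : {ω | ∃ n, ε ≤ M n ω} = ⋃ n, {ω | ε ≤ runningMax n ω} := by
    ext ω
    simp only [Set.mem_ofPred_eq, Set.mem_iUnion, le_runningMax_iff]
    exact ⟨fun ⟨n, hn⟩ ↦ ⟨n, n, le_rfl, hn⟩, fun ⟨_, k, _, hk⟩ ↦ ⟨k, hk⟩⟩
  have event_mono : Monotone fun n ↦ {ω | ε ≤ runningMax n ω} := by
    intro m n hmn ω hω
    obtain ⟨k, hkm, hk⟩ := (le_runningMax_iff m ω).1 hω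
    exact (le_runningMax_iff n ω).2 ⟨k, hkm.trans hmn, hk⟩
  rw [event_eq, event_mono.measure_iUnion, ENNReal.mul_iSup]
  refine iSup_le fun n ↦ (maximal_ineq hM hM_nonneg n).trans (ENNReal.ofReal_le_ofReal ?_)
  exact (setIntegral_le_integral (hM.integrable n) (ae_of_all _ (hM_nonneg n))).trans (hC n)

end Maximal

section IndependentProducts

variable {Ω : Type*} {mΩ : MeasurableSpace Ω} {μ : Measure Ω} {Y : ℕ → Ω → ℝ}

theorem integrable_prod_range_of_iIndepFun (hY : ∀ n, Measurable (Y n)) (hindep : iIndepFun Y μ)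
    (hint : ∀ n, Integrable (Y n) μ) (n : ℕ) :
    Integrable (∏ m ∈ Finset.range n, Y m) μ := by
  have := hindep.isProbabilityMeasure
  induction n with
  | zero => exact integrable_const (1 : ℝ)
  | succ n ih =>
    rw [Finset.prod_range_succ]
    exact (hindep.indepFun_prod_range_succ hY n).integrable_mul ih (hint n)

theorem martingale_prod_range_succ_of_iIndepFun (hY : ∀ n, StronglyMeasurable (Y n))
    (hindep : iIndepFun Y μ) (hmean : ∀ n, μ[Y n] = 1) :
    Martingale (fun n ↦ ∏ m ∈ Finset.range (n + 1), Y m) (Filtration.natural Y hY) μ := by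
  have := hindep.isProbabilityMeasure
  have hint (n : ℕ) : Integrable (Y n) μ := .of_integral_ne_zero (by simp [hmean n])
  have hprod_int (n : ℕ) : Integrable (∏ m ∈ Finset.range n, Y m) μ :=
    integrable_prod_range_of_iIndepFun (fun n ↦ (hY n).measurable) hindep hint n
  have hadapted : StronglyAdapted (Filtration.natural Y hY)
      fun n ↦ ∏ m ∈ Finset.range (n + 1), Y m := fun n ↦
    Finset.stronglyMeasurable_prod _ fun m hm ↦
      (Filtration.stronglyAdapted_natural hY).stronglyMeasurable_le
        (Nat.lt_succ_iff.1 (Finset.mem_range.1 hm))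
  refine martingale_nat hadapted (fun n ↦ hprod_int (n + 1)) fun n ↦ ?_
  simp only [Finset.prod_range_succ _ (n + 1)]
  have hpull := condExp_mul_of_stronglyMeasurable_left (hadapted n)
    (Finset.prod_range_succ Y (n + 1) ▸ hprod_int (n + 2)) (hint (n + 1))
  filter_upwards [hpull, hindep.condExp_natural_ae_eq_of_lt hY n.lt_succ_self] with ω hpull hcond
  rw [hpull, Pi.mul_apply, hcond, hmean, mul_one]

end IndependentProducts

section RandomWalk

variable {Ω : Type*} {mΩ : MeasurableSpace Ω} {μ : Measure Ω} {Z : ℕ → Ω → ℝ}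

theorem measure_exists_le_sum_range_succ_le (hZ : ∀ n, Measurable (Z n)) (hindep : iIndepFun Z μ)
    (hmean : ∀ n, ∫ ω, Real.exp (Z n ω) ∂μ = 1) (a : ℝ) :
    μ {ω | ∃ n, a ≤ ∑ m ∈ Finset.range (n + 1), Z m ω} ≤ ENNReal.ofReal (Real.exp (-a)) := by
  have := hindep.isProbabilityMeasure
  let Y (n : ℕ) (ω : Ω) : ℝ := Real.exp (Z n ω)
  have hY (n : ℕ) : StronglyMeasurable (Y n) := (hZ n).exp.stronglyMeasurable
  have hmart := martingale_prod_range_succ_of_iIndepFun hY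
    (hindep.comp (fun _ ↦ Real.exp) fun _ ↦ Real.measurable_exp) hmean
  have hprod (n : ℕ) (ω : Ω) :
      (∏ m ∈ Finset.range (n + 1), Y m) ω = Real.exp (∑ m ∈ Finset.range (n + 1), Z m ω) := by
    simp only [Finset.prod_apply, Y, Real.exp_sum]
  have hprod_nonneg : 0 ≤ fun n ↦ ∏ m ∈ Finset.range (n + 1), Y m :=
    fun n ω ↦ (Real.exp_pos _).le.trans_eq (hprod n ω).symm
  have hmean_prod (n : ℕ) : μ[∏ m ∈ Finset.range (n + 1), Y m] ≤ 1 := by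
    have hconst := hmart.setIntegral_eq n.zero_le MeasurableSet.univ
    simp only [setIntegral_univ] at hconst
    exact (hconst.symm.trans (by simpa using hmean 0)).le
  have hmax := mul_measure_exists_le_of_submartingale hmart.submartingale hprod_nonneg
    hmean_prod (Real.exp a).toNNReal
  simp only [hprod, Real.coe_toNNReal _ (Real.exp_pos a).le, Real.exp_le_exp,
    ENNReal.ofReal_one] at hmax
  rw [Real.exp_neg, ENNReal.ofReal_inv_of_pos (Real.exp_pos a)]
  exact ENNReal.le_inv_iff_mul_le.2 (mul_comm (ENNReal.ofReal (Real.exp a)) _ ▸ hmax)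

end RandomWalk

section LikelihoodRatio

variable {E : Type*} [MeasurableSpace E] {ν : Measure E} {f g : E → ℝ}

theorem integral_exp_log_div_withDensity (hf : Measurable f) (hfpos : ∀ᵐ t ∂ν, 0 < f t)
    (hgpos : ∀ᵐ t ∂ν, 0 < g t) :
    ∫ t, Real.exp (Real.log (g t / f t)) ∂(ν.withDensity fun t ↦ ENNReal.ofReal (f t))
      = ∫ t, g t ∂ν := by
  rw [integral_withDensity_eq_integral_toReal_smul hf.ennreal_ofReal
    (ae_of_all _ fun _ ↦ ENNReal.ofReal_lt_top)]
  refine integral_congr_ae ?_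
  filter_upwards [hfpos, hgpos] with t hft hgt
  rw [ENNReal.toReal_ofReal hft.le, Real.exp_log (div_pos hgt hft), smul_eq_mul,
    mul_div_cancel₀ _ hft.ne']

theorem measure_exists_le_sum_log_div_le {Ω : Type*} [MeasurableSpace Ω] {P : Measure Ω}
    (hf : Measurable f) (hg : Measurable g)
    (hfpos : ∀ᵐ t ∂ν, 0 < f t) (hgpos : ∀ᵐ t ∂ν, 0 < g t) (hgprob : ∫ t, g t ∂ν = 1)
    {X : ℕ → Ω → E} (hX : ∀ n, Measurable (X n)) (hindep : iIndepFun X P)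
    (hdist : ∀ n, P.map (X n) = ν.withDensity fun t ↦ ENNReal.ofReal (f t)) (a : ℝ) :
    P {ω | ∃ n, a ≤ ∑ m ∈ Finset.range (n + 1), Real.log (g (X m ω) / f (X m ω))}
      ≤ ENNReal.ofReal (Real.exp (-a)) := by
  have hlog : Measurable fun t ↦ Real.log (g t / f t) := (hg.div hf).log
  refine measure_exists_le_sum_range_succ_le (fun n ↦ hlog.comp (hX n))
    (hindep.comp (fun _ t ↦ Real.log (g t / f t)) fun _ ↦ hlog) (fun n ↦ ?_) a
  calc ∫ ω, Real.exp (Real.log (g (X n ω) / f (X n ω))) ∂P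
      = ∫ t, Real.exp (Real.log (g t / f t)) ∂(P.map (X n)) :=
        (integral_map (hX n).aemeasurable hlog.exp.aestronglyMeasurable).symm
    _ = ∫ t, g t ∂ν := by rw [hdist n, integral_exp_log_div_withDensity hf hfpos hgpos]
    _ = 1 := hgprob

end LikelihoodRatio

/-- Wald's error bounds for the SPRT with thresholds `a` and `-b`:
the probability under `Pf` (i.i.d. with density `f`) that the log-likelihood ratio
process exits `(-b, a)` for the first time through the upper boundary is at most
`e^{-a}`, and the probability under `Pg` (i.i.d. with density `g`) that it exits for
the first time through the lower boundary is at most `e^{-b}`. The events below are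
exactly `{T < ∞ ∧ λ(T) ≥ a}` and `{T < ∞ ∧ λ(T) ≤ -b}` for
`T = inf{n ≥ 1 : λ(n) ∉ (-b,a)}`. -/
theorem stmt_6
    {Ω : Type*} [MeasurableSpace Ω] (Pf Pg : Measure Ω)
    [IsProbabilityMeasure Pf] [IsProbabilityMeasure Pg]
    {E : Type*} [mE : MeasurableSpace E] (ν : Measure E) [SigmaFinite ν]
    (f g : E → ℝ) (hf : Measurable f) (hg : Measurable g)
    (hfpos : ∀ᵐ t ∂ν, 0 < f t) (hgpos : ∀ᵐ t ∂ν, 0 < g t)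
    (hfprob : ∫ t, f t ∂ν = 1) (hgprob : ∫ t, g t ∂ν = 1)
    (X : ℕ → Ω → E) (hX : ∀ n, Measurable (X n))
    (hindep_f : iIndepFun (m := fun _ => mE) X Pf)
    (hdist_f : ∀ n, Pf.map (X n) = ν.withDensity fun t => ENNReal.ofReal (f t))
    (hindep_g : iIndepFun (m := fun _ => mE) X Pg)
    (hdist_g : ∀ n, Pg.map (X n) = ν.withDensity fun t => ENNReal.ofReal (g t))
    (a b : ℝ) (ha : 0 < a) (hb : 0 < b) :
    let lam : ℕ → Ω → ℝ := fun n ω =>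
      ∑ m ∈ Finset.range n, Real.log (g (X m ω) / f (X m ω))
    Pf {ω | ∃ n : ℕ, 1 ≤ n ∧ (∀ m : ℕ, 1 ≤ m → m < n → lam m ω ∈ Set.Ioo (-b) a) ∧
          a ≤ lam n ω}
        ≤ ENNReal.ofReal (Real.exp (-a)) ∧
    Pg {ω | ∃ n : ℕ, 1 ≤ n ∧ (∀ m : ℕ, 1 ≤ m → m < n → lam m ω ∈ Set.Ioo (-b) a) ∧
          lam n ω ≤ -b}
        ≤ ENNReal.ofReal (Real.exp (-b)) := by
  intro lam
  constructor
  · refine (measure_mono ?_).trans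
      (measure_exists_le_sum_log_div_le hf hg hfpos hgpos hgprob hX hindep_f hdist_f a)
    rintro ω ⟨n, hn, -, hup⟩
    exact ⟨n - 1, (Nat.sub_add_cancel hn).symm ▸ hup⟩
  · refine (measure_mono ?_).trans
      (measure_exists_le_sum_log_div_le hg hf hgpos hfpos hfprob hX hindep_g hdist_g b)
    rintro ω ⟨n, hn, -, hdown⟩
    have neg_lam : ∑ m ∈ Finset.range n, Real.log (f (X m ω) / g (X m ω)) = -lam n ω := by
      simp only [lam, ← Finset.sum_neg_distrib, ← Real.log_inv, inv_div]
    exact ⟨n - 1, (Nat.sub_add_cancel hn).symm ▸ neg_lam ▸ le_neg_of_le_neg hdown⟩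
end

section
/- Let P and Q be probability measures on a measurable space with P absolutely continuous with respect to Q. Then for every measurable set Γ with 0 < P(Γ) < 1 and 0 < Q(Γ) < 1, the Kullback–Leibler divergence KL(P‖Q) := ∫ log(dP/dQ) dP ∈ [0,∞] satisfies KL(P‖Q) ≥ d(P(Γ), Q(Γᶜ)), where Γᶜ denotes the complement of Γ. -/
open MeasureTheory Classical
open scoped ENNReal

/-
On an event `s`, Jensen's inequality for the convex function `x ↦ x log x` and the density `dμ/dν`,
averaged over `s` against `ν`, gives `μ(s) log (μ(s)/ν(s)) ≤ ∫_s log (dμ/dν) dμ`. Adding the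
inequalities for `Γ` and `Γᶜ` bounds the divergence of the two Bernoulli laws by `KL(P‖Q)`.
-/

section LogSum

variable {α : Type*} {mα : MeasurableSpace α} {μ ν : Measure α} {s : Set α}

lemma integrableOn_rnDeriv_smul_iff {E : Type*} [NormedAddCommGroup E] [NormedSpace ℝ E]
    [μ.HaveLebesgueDecomposition ν] [SigmaFinite μ] (hμν : μ ≪ ν) (hs : MeasurableSet s)
    {f : α → E} :
    IntegrableOn (fun x ↦ (μ.rnDeriv ν x).toReal • f x) s ν ↔ IntegrableOn f s μ := by
  rw [← integrable_indicator_iff hs, ← integrable_indicator_iff hs,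
    ← integrable_rnDeriv_smul_iff hμν, Set.indicator_smul]

lemma measureReal_mul_log_le_setIntegral_llr
    [μ.HaveLebesgueDecomposition ν] [SigmaFinite μ] (hμν : μ ≪ ν) (hs : MeasurableSet s)
    (hμs : μ s ≠ ∞) (hνs : ν s ≠ ∞) (hllr : IntegrableOn (llr μ ν) s μ) :
    μ.real s * Real.log (μ.real s / ν.real s) ≤ ∫ x in s, llr μ ν x ∂μ := by
  by_cases hνs_zero : ν s = 0
  · simp [measureReal_def, hμν hνs_zero]
  have hνs_real : ν.real s ≠ 0 := ENNReal.toReal_ne_zero.2 ⟨hνs_zero, hνs⟩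
  have average_density : ⨍ x in s, (μ.rnDeriv ν x).toReal ∂ν = μ.real s / ν.real s := by
    rw [setAverage_eq, Measure.setIntegral_toReal_rnDeriv' hμν hs, smul_eq_mul, inv_mul_eq_div]
  have jensen := Real.convexOn_mul_log.map_set_average_le Real.continuous_mul_log.continuousOn
    isClosed_Ici hνs_zero hνs (ae_of_all _ fun _ ↦ ENNReal.toReal_nonneg)
    (Measure.integrableOn_toReal_rnDeriv hμs) ((integrableOn_rnDeriv_smul_iff hμν hs).2 hllr)
  rw [average_density] at jensen
  calc μ.real s * Real.log (μ.real s / ν.real s)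
      = ν.real s * (μ.real s / ν.real s * Real.log (μ.real s / ν.real s)) := by field_simp
    _ ≤ ν.real s * ⨍ x in s, (μ.rnDeriv ν x).toReal * llr μ ν x ∂ν := by
        gcongr
        exact jensen
    _ = ∫ x in s, (μ.rnDeriv ν x).toReal * llr μ ν x ∂ν := by
        rw [← smul_eq_mul, measure_smul_setAverage _ hνs]
    _ = ∫ x in s, llr μ ν x ∂μ := setIntegral_toReal_rnDeriv_mul hμν hs

lemma measureReal_mul_log_add_compl_le_integral_llr [IsFiniteMeasure μ] [IsFiniteMeasure ν]
    (hμν : μ ≪ ν) (hs : MeasurableSet s) (hllr : Integrable (llr μ ν) μ) :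
    μ.real s * Real.log (μ.real s / ν.real s) + μ.real sᶜ * Real.log (μ.real sᶜ / ν.real sᶜ) ≤
      ∫ x, llr μ ν x ∂μ := by
  rw [← integral_add_compl hs hllr]
  exact add_le_add
    (measureReal_mul_log_le_setIntegral_llr hμν hs (measure_ne_top _ _) (measure_ne_top _ _)
      hllr.integrableOn)
    (measureReal_mul_log_le_setIntegral_llr hμν hs.compl (measure_ne_top _ _)
      (measure_ne_top _ _) hllr.integrableOn)

end LogSum

/-- Information-theoretic lower bound: if `P ≪ Q` are probability measures and `Γ`
is a measurable event with `0 < P Γ < 1` and `0 < Q Γ < 1`, then the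
Kullback–Leibler divergence `KL(P‖Q) = ∫ log(dP/dQ) dP ∈ [0,∞]` (equal to `+∞`
when the log-likelihood ratio is not integrable) is at least
`d(P(Γ), Q(Γᶜ))`, where `d(x,y) = x log(x/(1-y)) + (1-x) log((1-x)/y)`. -/
theorem stmt_8
    {Ω : Type*} [MeasurableSpace Ω] (P Q : Measure Ω)
    [IsProbabilityMeasure P] [IsProbabilityMeasure Q]
    (hPQ : P ≪ Q)
    (Γ : Set Ω) (hΓ : MeasurableSet Γ)
    (h1 : 0 < P Γ) (h2 : P Γ < 1) (h3 : 0 < Q Γ) (h4 : Q Γ < 1) :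
    let d : ℝ → ℝ → ℝ := fun x y =>
      x * Real.log (x / (1 - y)) + (1 - x) * Real.log ((1 - x) / y)
    let KL : EReal :=
      if Integrable (llr P Q) P then ((∫ ω, llr P Q ω ∂P : ℝ) : EReal) else ⊤
    ((d (P Γ).toReal (Q Γᶜ).toReal : ℝ) : EReal) ≤ KL := by
  intro d KL
  by_cases hllr : Integrable (llr P Q) P
  · have hP : 1 - P.real Γ = P.real Γᶜ := (probReal_compl_eq_one_sub hΓ).symm
    have hQ : 1 - Q.real Γᶜ = Q.real Γ := by rw [probReal_compl_eq_one_sub hΓ, sub_sub_cancel]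
    simp only [KL, d, if_pos hllr, EReal.coe_le_coe_iff, ← measureReal_def, hP, hQ]
    exact measureReal_mul_log_add_compl_le_integral_llr hPQ hΓ hllr
  · simp only [KL, if_neg hllr, le_top]
end

section
/- The function (x,y) ↦ d(x,y)/|log y| converges to 1 as x → 0⁺ and y → 0⁺; that is, the function (x,y) ↦ d(x,y)/(−log y) tends to 1 along the product of the filters of right-neighborhoods of 0 within (0,1) in each coordinate. -/
open Filter

/-!
`d(x, y)` is the Kullback–Leibler divergence between Bernoulli laws of parameters `x` and `1 - y`.
Written as cross entropy minus entropy, it is `(1 - x) (-log y) - (H(x) + x log (1 - y))`, where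
`H` is the binary entropy.
The subtracted term stays bounded as `y → 0⁺`, whereas `-log y → ∞`, so the quotient
`d(x, y) / (-log y)` has the same limit as `1 - x`.
-/

open Real Set Topology

lemma mul_log_div_eq_neg_negMulLog_sub (x : ℝ) {c : ℝ} (hc : c ≠ 0) :
    x * log (x / c) = -negMulLog x - x * log c := by
  rcases eq_or_ne x 0 with rfl | hx
  · simp
  · rw [log_div hx hc, negMulLog]
    ring

lemma mul_log_div_add_eq_sub_binEntropy (x : ℝ) {y : ℝ} (hy₀ : y ≠ 0) (hy₁ : y ≠ 1) :
    x * log (x / (1 - y)) + (1 - x) * log ((1 - x) / y) =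
      (1 - x) * -log y - (binEntropy x + x * log (1 - y)) := by
  rw [mul_log_div_eq_neg_negMulLog_sub x (sub_ne_zero.mpr hy₁.symm),
    mul_log_div_eq_neg_negMulLog_sub (1 - x) hy₀, binEntropy_eq_negMulLog_add_negMulLog_one_sub]
  ring

lemma tendsto_binEntropy_add_mul_log_one_sub (x₀ : ℝ) :
    Tendsto (fun p : ℝ × ℝ => binEntropy p.1 + p.1 * log (1 - p.2)) (𝓝 (x₀, 0))
      (𝓝 (binEntropy x₀)) := by
  have hlog : ContinuousAt (fun p : ℝ × ℝ => log (1 - p.2)) (x₀, 0) :=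
    ContinuousAt.log (by fun_prop) (by simp)
  have hentropy : ContinuousAt (fun p : ℝ × ℝ => binEntropy p.1) (x₀, 0) :=
    (binEntropy_continuous.comp continuous_fst).continuousAt
  simpa using hentropy.tendsto.add (continuousAt_fst.tendsto.mul hlog.tendsto)

lemma tendsto_inv_neg_log_nhdsGT_zero : Tendsto (fun y => (-log y)⁻¹) (𝓝[>] 0) (𝓝 0) :=
  (tendsto_neg_atBot_atTop.comp tendsto_log_nhdsGT_zero).inv_tendsto_atTop

theorem stmt_9_general (x₀ : ℝ) :
    Tendsto
      (fun p : ℝ × ℝ =>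
        (p.1 * log (p.1 / (1 - p.2)) + (1 - p.1) * log ((1 - p.1) / p.2)) / (-log p.2))
      (𝓝[Icc 0 1] x₀ ×ˢ 𝓝[>] 0) (𝓝 (1 - x₀)) := by
  have hle : 𝓝[Icc 0 1] x₀ ×ˢ 𝓝[>] (0 : ℝ) ≤ 𝓝 (x₀, 0) :=
    nhds_prod_eq (x := x₀) (y := (0 : ℝ)) ▸ prod_mono nhdsWithin_le_nhds nhdsWithin_le_nhds
  have hmain : Tendsto (fun p : ℝ × ℝ => 1 - p.1) (𝓝[Icc 0 1] x₀ ×ˢ 𝓝[>] 0) (𝓝 (1 - x₀)) :=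
    (continuousAt_const.sub continuousAt_fst).tendsto.mono_left hle
  have hremainder : Tendsto
      (fun p : ℝ × ℝ => (binEntropy p.1 + p.1 * log (1 - p.2)) * (-log p.2)⁻¹)
      (𝓝[Icc 0 1] x₀ ×ˢ 𝓝[>] 0) (𝓝 0) := by
    simpa only [mul_zero, Function.comp_apply] using
      ((tendsto_binEntropy_add_mul_log_one_sub x₀).mono_left hle).mul
        (tendsto_inv_neg_log_nhdsGT_zero.comp tendsto_snd)
  have hy : ∀ᶠ p : ℝ × ℝ in 𝓝[Icc 0 1] x₀ ×ˢ 𝓝[>] 0, p.2 ∈ Ioo (0 : ℝ) 1 :=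
    tendsto_snd.eventually (Ioo_mem_nhdsGT one_pos)
  rw [← sub_zero (1 - x₀)]
  refine (hmain.sub hremainder).congr' ?_
  filter_upwards [hy] with p ⟨hy₀, hy₁⟩
  have hlog : -log p.2 ≠ 0 := neg_ne_zero.mpr (log_neg hy₀ hy₁).ne
  rw [mul_log_div_add_eq_sub_binEntropy p.1 hy₀.ne' hy₁.ne, sub_div, mul_div_cancel_right₀ _ hlog,
    ← div_eq_mul_inv]

/-- Asymptotics of `d(x,y) = x log(x/(1-y)) + (1-x) log((1-x)/y)`:
`d(x,y)/(-log y) → 1` as `x → 0⁺` and `y → 0⁺` (along right-neighborhoods of `0`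
within `(0,1)` in each coordinate). -/
theorem stmt_9 :
    Tendsto
      (fun p : ℝ × ℝ =>
        (p.1 * Real.log (p.1 / (1 - p.2)) + (1 - p.1) * Real.log ((1 - p.1) / p.2)) /
          (-Real.log p.2))
      ((nhdsWithin 0 (Set.Ioo 0 1)) ×ˢ (nhdsWithin 0 (Set.Ioo 0 1))) (nhds 1) := by
  simpa only [sub_zero] using (stmt_9_general 0).mono_left <|
    prod_mono (nhdsWithin_mono 0 Ioo_subset_Icc_self) (nhdsWithin_mono 0 Ioo_subset_Ioi_self)
end

section
/- Let x, x', y, y' ∈ (0,1) satisfy x + y < 1, x' ≤ x, and y' ≤ y. Then d(x', y') ≥ d(x, y); that is, on the region {(x,y) ∈ (0,1)² : x + y < 1}, the function d is non-increasing in each of its two arguments (and strictly decreasing when the corresponding argument strictly decreases). -/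
/-!
Here `d(x, y)` is the relative entropy `D(x ‖ 1 - y)` between Bernoulli distributions. The
three-point identity of this Bregman divergence,
`D(p ‖ r) = D(p ‖ q) + D(q ‖ r) + (q - p) (logit r - logit q)`,
has a nonnegative last term when `p ≤ q ≤ r`, so `D(p ‖ r)` then exceeds `D(q ‖ r)` by at least
`D(p ‖ q)` and exceeds `D(p ‖ q)` by at least `D(q ‖ r)`. By Gibbs' inequality both gaps are
positive for distinct arguments, which is the strict monotonicity in each argument.
-/

open Set InformationTheory

/-- The relative entropy (Kullback–Leibler divergence) of the Bernoulli distribution of mean `p`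
with respect to the one of mean `q`, in nats. It is meant for `p ∈ [0, 1]` and `q ∈ (0, 1)`;
outside this range the values of `Real.log` and of division by zero make it meaningless. -/
noncomputable def binRelEntropy (p q : ℝ) : ℝ :=
  p * Real.log (p / q) + (1 - p) * Real.log ((1 - p) / (1 - q))

section

variable {p q r : ℝ}

lemma mul_klFun_div (hq : q ≠ 0) : q * klFun (p / q) = p * Real.log (p / q) + q - p := by
  rw [klFun_apply]
  field_simp

lemma binRelEntropy_eq_klFun (hq : q ∈ Ioo 0 1) :
    binRelEntropy p q = q * klFun (p / q) + (1 - q) * klFun ((1 - p) / (1 - q)) := by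
  rw [mul_klFun_div hq.1.ne', mul_klFun_div (sub_pos.2 hq.2).ne', binRelEntropy]
  ring

lemma binRelEntropy_pos (hp : p ∈ Icc 0 1) (hq : q ∈ Ioo 0 1) (hpq : p ≠ q) :
    0 < binRelEntropy p q := by
  have hq_compl : 0 < 1 - q := sub_pos.2 hq.2
  have h_ratio : 0 ≤ p / q := div_nonneg hp.1 hq.1.le
  have h_ratio_compl : 0 ≤ (1 - p) / (1 - q) := div_nonneg (sub_nonneg.2 hp.2) hq_compl.le
  have h_klFun_pos : 0 < klFun (p / q) := by
    refine (klFun_nonneg h_ratio).lt_of_ne' ?_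
    rwa [Ne, klFun_eq_zero_iff h_ratio, div_eq_one_iff_eq hq.1.ne']
  rw [binRelEntropy_eq_klFun hq]
  exact add_pos_of_pos_of_nonneg (mul_pos hq.1 h_klFun_pos)
    (mul_nonneg hq_compl.le (klFun_nonneg h_ratio_compl))

lemma mul_log_div (hq : q ≠ 0) :
    p * Real.log (p / q) = p * (Real.log p - Real.log q) := by
  rcases eq_or_ne p 0 with rfl | hp
  · simp
  · rw [Real.log_div hp hq]

lemma binRelEntropy_three_point (hq : q ∈ Ioo 0 1) (hr : r ∈ Ioo 0 1) :
    binRelEntropy p r = binRelEntropy p q + binRelEntropy q r +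
      (q - p) * (Real.log (r / (1 - r)) - Real.log (q / (1 - q))) := by
  have hq_compl : 1 - q ≠ 0 := (sub_pos.2 hq.2).ne'
  have hr_compl : 1 - r ≠ 0 := (sub_pos.2 hr.2).ne'
  simp only [binRelEntropy, mul_log_div hq.1.ne', mul_log_div hr.1.ne', mul_log_div hq_compl,
    mul_log_div hr_compl, Real.log_div hq.1.ne' hq_compl, Real.log_div hr.1.ne' hr_compl]
  ring

lemma log_odds_le_log_odds (hq : 0 < q) (hqr : q ≤ r) (hr : r < 1) :
    Real.log (q / (1 - q)) ≤ Real.log (r / (1 - r)) := by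
  have hr_compl : 0 < 1 - r := sub_pos.2 hr
  have hq_compl : 0 < 1 - q := sub_pos.2 (hqr.trans_lt hr)
  exact Real.log_le_log (div_pos hq hq_compl)
    (div_le_div₀ (hq.le.trans hqr) hqr hr_compl (sub_le_sub_left hqr 1))

lemma binRelEntropy_add_le (hpq : p ≤ q) (hq : 0 < q) (hqr : q ≤ r) (hr : r < 1) :
    binRelEntropy p q + binRelEntropy q r ≤ binRelEntropy p r := by
  rw [binRelEntropy_three_point (p := p) ⟨hq, hqr.trans_lt hr⟩ ⟨hq.trans_le hqr, hr⟩]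
  exact le_add_of_nonneg_right
    (mul_nonneg (sub_nonneg.2 hpq) (sub_nonneg.2 (log_odds_le_log_odds hq hqr hr)))

lemma strictAntiOn_binRelEntropy_left (hr : r < 1) :
    StrictAntiOn (binRelEntropy · r) (Icc 0 r) := by
  intro p hp q hq hpq
  have hq_pos : 0 < q := hp.1.trans_lt hpq
  have h_pos : 0 < binRelEntropy p q :=
    binRelEntropy_pos ⟨hp.1, hp.2.trans hr.le⟩ ⟨hq_pos, hq.2.trans_lt hr⟩ hpq.ne
  exact (lt_add_of_pos_left _ h_pos).trans_le (binRelEntropy_add_le hpq.le hq_pos hq.2 hr)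

lemma strictMonoOn_binRelEntropy_right (hp : 0 < p) :
    StrictMonoOn (binRelEntropy p) (Ico p 1) := by
  intro q hq r hr hqr
  have hq_pos : 0 < q := hp.trans_le hq.1
  have h_pos : 0 < binRelEntropy q r :=
    binRelEntropy_pos ⟨hq_pos.le, hq.2.le⟩ ⟨hq_pos.trans hqr, hr.2⟩ hqr.ne
  exact (lt_add_of_pos_right _ h_pos).trans_le (binRelEntropy_add_le hq.1 hq_pos hqr.le hr.2)

end

/-- Monotonicity of `d(x,y) = x log(x/(1-y)) + (1-x) log((1-x)/y)` on the region
`{(x,y) ∈ (0,1)² : x + y < 1}`: if `x' ≤ x` and `y' ≤ y` then `d(x',y') ≥ d(x,y)`,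
with strict inequality if `x' < x` or `y' < y`. -/
theorem stmt_10 (x x' y y' : ℝ)
    (hx : x ∈ Set.Ioo (0 : ℝ) 1) (hx' : x' ∈ Set.Ioo (0 : ℝ) 1)
    (hy : y ∈ Set.Ioo (0 : ℝ) 1) (hy' : y' ∈ Set.Ioo (0 : ℝ) 1)
    (hxy : x + y < 1) (hxx : x' ≤ x) (hyy : y' ≤ y) :
    let d : ℝ → ℝ → ℝ := fun u v =>
      u * Real.log (u / (1 - v)) + (1 - u) * Real.log ((1 - u) / v)
    d x y ≤ d x' y' ∧ ((x' < x ∨ y' < y) → d x y < d x' y') := by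
  intro d
  have hd (u v : ℝ) : d u v = binRelEntropy u (1 - v) := by
    simp only [d, binRelEntropy, sub_sub_cancel]
  have h_left : StrictAntiOn (binRelEntropy · (1 - y)) (Icc 0 (1 - y)) :=
    strictAntiOn_binRelEntropy_left (sub_lt_self 1 hy.1)
  have h_right : StrictMonoOn (binRelEntropy x') (Ico x' 1) :=
    strictMonoOn_binRelEntropy_right hx'.1
  have hx_mem : x ∈ Icc 0 (1 - y) := ⟨hx.1.le, by linarith⟩
  have hx'_mem : x' ∈ Icc 0 (1 - y) := ⟨hx'.1.le, by linarith⟩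
  have hy_mem : 1 - y ∈ Ico x' 1 := ⟨by linarith, sub_lt_self 1 hy.1⟩
  have hy'_mem : 1 - y' ∈ Ico x' 1 := ⟨by linarith, sub_lt_self 1 hy'.1⟩
  have h_le_left := h_left.antitoneOn hx'_mem hx_mem hxx
  have h_le_right := h_right.monotoneOn hy_mem hy'_mem (sub_le_sub_left hyy 1)
  rw [hd, hd]
  refine ⟨h_le_left.trans h_le_right, ?_⟩
  rintro (hlt | hlt)
  · exact (h_left hx'_mem hx_mem hlt).trans_le h_le_right
  · exact h_le_left.trans_lt (h_right hy_mem hy'_mem (sub_lt_sub_left hlt 1))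
end

section
/- Let ν be a σ-finite measure on a measurable space and let f and g be two ν-a.e. strictly positive probability densities with respect to ν, and set I := ∫ g log(g/f) dν and J := ∫ f log(f/g) dν. Let (X_n)_{n≥1} be i.i.d. random variables, set λ(n) := ∑_{m=1}^n log(g(X_m)/f(X_m)), and for thresholds a, b > 0 define the SPRT stopping time T := inf{n ≥ 1 : λ(n) ∉ (−b, a)}. If I ∈ (0,∞), then E_g[T^r] < ∞ for every real r ≥ 1; if J ∈ (0,∞), then E_f[T^r] < ∞ for every real r ≥ 1. -/
open MeasureTheory ProbabilityTheory
open scoped ENNReal BigOperators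

/-!
The argument is Stein's: under the law of the sample, `λ(n)` is a random walk with i.i.d. steps, and
such a walk leaves every bounded set with a geometric tail unless its steps vanish almost surely.
If they do not, the step law charges a ball of radius `‖v‖ / 2` around some `v ≠ 0`; with positive
probability all `m` steps of a block fall in that ball, and for `m` large the increment over the
block exceeds the diameter of the set. Blocks are independent, so staying inside during `k` blocks
has probability at most `q ^ k` with `q < 1`. Finally `I ≠ 0` or `J ≠ 0` forces `f ≠ g` on a set of
positive measure, where the steps `log (g / f)` do not vanish.
-/

lemma iIndepFun_curry {Ω ι κ : Type*} [MeasurableSpace Ω] {P : Measure Ω} {β : ι → κ → Type*}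
    [∀ i j, MeasurableSpace (β i j)] {Y : (i : ι) → (j : κ) → Ω → β i j}
    (hY : ∀ i j, Measurable (Y i j)) (hindep : iIndepFun (fun p : ι × κ => Y p.1 p.2) P) :
    iIndepFun (fun i ω j => Y i j ω) P := by
  have := hindep.isProbabilityMeasure
  have hsigma : iIndepFun (fun p : (_ : ι) × κ => Y p.1 p.2) P :=
    hindep.precomp (Equiv.sigmaEquivProd ι κ).injective
  have hfiber (i : ι) : iIndepFun (Y i) P :=
    hindep.precomp (g := Prod.mk i) (Prod.mk_right_injective i)
  have (i : ι) (j : κ) : IsProbabilityMeasure (P.map (Y i j)) :=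
    Measure.isProbabilityMeasure_map (hY i j).aemeasurable
  rw [iIndepFun_iff_map_fun_eq_infinitePi_map (by fun_prop)]
  simp_rw [fun i => (hfiber i).map_fun_eq_infinitePi_map (hY i)]
  rw [← Measure.infinitePi_map_piCurry (fun i j => P.map (Y i j)),
    ← hsigma.map_fun_eq_infinitePi_map (fun p => hY p.1 p.2),
    Measure.map_map (by fun_prop) (by fun_prop)]
  rfl

section GeometricTail

lemma pow_le_tsum_succ_pow_mul_indicator_Ioi {N : ℕ} (hN : N ≠ 0) (x : ℝ≥0∞) :
    x ^ N ≤ ∑' k : ℕ, ((k : ℝ≥0∞) + 1) ^ N * (Set.Ioi (k : ℝ≥0∞)).indicator 1 x := by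
  rcases eq_or_ne x ⊤ with rfl | hx
  · refine le_top.trans ?_
    rw [← ENNReal.tsum_const_eq_top_of_ne_zero (α := ℕ) one_ne_zero]
    refine ENNReal.tsum_le_tsum fun k => ?_
    simpa using one_le_pow₀ (le_add_self : (1 : ℝ≥0∞) ≤ k + 1)
  · classical
    have hex : ∃ k : ℕ, x ≤ k := (ENNReal.exists_nat_gt hx).imp fun _ => le_of_lt
    rcases hk : Nat.find hex with _ | k
    · have hx0 : x = 0 := by simpa [hk] using Nat.find_spec hex
      simp [hx0, hN]
    · have hlt : (k : ℝ≥0∞) < x := not_le.1 (Nat.find_min hex (by omega))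
      have hle : x ≤ (k : ℝ≥0∞) + 1 := by simpa [hk] using Nat.find_spec hex
      calc x ^ N ≤ ((k : ℝ≥0∞) + 1) ^ N * (Set.Ioi (k : ℝ≥0∞)).indicator 1 x := by
            rw [Set.indicator_of_mem (Set.mem_Ioi.2 hlt), Pi.one_apply, mul_one]
            gcongr
        _ ≤ _ := ENNReal.le_tsum k

lemma tsum_succ_pow_mul_geometric_lt_top (N : ℕ) {q : ℝ≥0∞} (hq : q < 1) :
    ∑' k : ℕ, ((k : ℝ≥0∞) + 1) ^ N * q ^ k < ⊤ := by
  obtain ⟨p, hqp, hp1⟩ := exists_between hq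
  lift p to NNReal using hp1.ne_top
  have hp0 : p ≠ 0 := by rintro rfl; simp at hqp
  have hsummable : Summable fun k : ℕ => ((k : NNReal) + 1) ^ N * p ^ k := by
    have hshift := (summable_nat_add_iff 1).2 <|
      summable_pow_mul_geometric_of_norm_lt_one N (r := (p : ℝ)) (by simpa using hp1)
    rw [← NNReal.summable_coe]
    refine (hshift.mul_right (p : ℝ)⁻¹).congr fun k => ?_
    have hpR : (p : ℝ) ≠ 0 := by exact_mod_cast hp0
    push_cast
    rw [pow_succ, ← mul_assoc, mul_inv_cancel_right₀ hpR]
  calc ∑' k : ℕ, ((k : ℝ≥0∞) + 1) ^ N * q ^ k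
      ≤ ∑' k : ℕ, ((((k : NNReal) + 1) ^ N * p ^ k : NNReal) : ℝ≥0∞) := by
        refine ENNReal.tsum_le_tsum fun k => ?_
        push_cast
        gcongr
    _ < ⊤ := (ENNReal.tsum_coe_ne_top_iff_summable.2 hsummable).lt_top

lemma lintegral_pow_lt_top_of_geometric_tail {Ω : Type*} [MeasurableSpace Ω] {μ : Measure Ω}
    {τ : Ω → ℝ≥0∞} (hτ : Measurable τ) {q : ℝ≥0∞} (hq : q < 1)
    (htail : ∀ k : ℕ, μ {ω | (k : ℝ≥0∞) < τ ω} ≤ q ^ k) {N : ℕ} (hN : N ≠ 0) :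
    ∫⁻ ω, τ ω ^ N ∂μ < ⊤ := by
  have hmeas (k : ℕ) : MeasurableSet {ω | (k : ℝ≥0∞) < τ ω} := measurableSet_lt measurable_const hτ
  calc ∫⁻ ω, τ ω ^ N ∂μ
      ≤ ∫⁻ ω, ∑' k : ℕ, ((k : ℝ≥0∞) + 1) ^ N * {ω | (k : ℝ≥0∞) < τ ω}.indicator 1 ω ∂μ :=
        lintegral_mono fun ω => pow_le_tsum_succ_pow_mul_indicator_Ioi hN (τ ω)
    _ = ∑' k : ℕ, ((k : ℝ≥0∞) + 1) ^ N * μ {ω | (k : ℝ≥0∞) < τ ω} := by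
        rw [lintegral_tsum fun k => ((measurable_one.indicator (hmeas k)).const_mul _).aemeasurable]
        refine tsum_congr fun k => ?_
        rw [lintegral_const_mul _ (measurable_one.indicator (hmeas k)),
          lintegral_indicator_one (hmeas k)]
    _ ≤ ∑' k : ℕ, ((k : ℝ≥0∞) + 1) ^ N * q ^ k :=
        ENNReal.tsum_le_tsum fun k => by gcongr; exact htail k
    _ < ⊤ := tsum_succ_pow_mul_geometric_lt_top N hq

end GeometricTail

section ExitTime

variable {Ω V : Type*} [AddCommMonoid V]

/-- The first time `n ≥ 1` at which the random walk `Z 0 + ⋯ + Z (n - 1)` is outside `s`,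
with value `⊤` if the walk never leaves `s`. -/
noncomputable def exitTime (Z : ℕ → Ω → V) (s : Set V) (ω : Ω) : ℝ≥0∞ :=
  sInf {t : ℝ≥0∞ | ∃ n : ℕ, 1 ≤ n ∧ t = n ∧ ∑ i ∈ Finset.range n, Z i ω ∉ s}

variable {Z : ℕ → Ω → V} {s : Set V}

lemma one_le_exitTime (ω : Ω) : 1 ≤ exitTime Z s ω := by
  refine le_sInf ?_
  rintro _ ⟨n, hn, rfl, -⟩
  exact_mod_cast hn

lemma exitTime_mono {t : Set V} (hst : s ⊆ t) (ω : Ω) : exitTime Z s ω ≤ exitTime Z t ω :=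
  sInf_le_sInf fun _ ⟨n, hn, hxn, hnt⟩ => ⟨n, hn, hxn, fun hns => hnt (hst hns)⟩

lemma sum_range_mem_of_lt_exitTime {n : ℕ} (hn : 1 ≤ n) {ω : Ω} (hlt : n < exitTime Z s ω) :
    ∑ i ∈ Finset.range n, Z i ω ∈ s := by
  by_contra hns
  exact hlt.not_ge (sInf_le ⟨n, hn, rfl, hns⟩)

lemma measurable_exitTime [MeasurableSpace Ω] [MeasurableSpace V] [MeasurableAdd₂ V]
    (hZ : ∀ n, Measurable (Z n)) (hs : MeasurableSet s) : Measurable (exitTime Z s) := by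
  refine measurable_of_Iio fun x => ?_
  have hpreimage : exitTime Z s ⁻¹' Set.Iio x =
      ⋃ n : ℕ, {ω | (1 ≤ n ∧ (n : ℝ≥0∞) < x) ∧ ∑ i ∈ Finset.range n, Z i ω ∉ s} := by
    ext ω
    simp only [exitTime, Set.mem_preimage, Set.mem_Iio, sInf_lt_iff, Set.mem_ofPred_eq,
      Set.mem_iUnion]
    grind
  rw [hpreimage]
  exact .iUnion fun n => (MeasurableSet.const _).inter
    ((Finset.measurable_fun_sum _ fun i _ => hZ i) hs.compl)

end ExitTime

section BlockSum

lemma injective_blockIndex (m : ℕ) : Function.Injective fun p : ℕ × Fin m => p.1 * m + p.2 := by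
  intro p p' h
  have : NeZero m := ⟨p.2.pos.ne'⟩
  exact (Nat.divModEquiv m).symm.injective h

variable {Ω V : Type*} [AddCommMonoid V]

/-- The increment of the random walk with steps `Z` over its `j`-th block of `m` steps. -/
def blockSum (Z : ℕ → Ω → V) (m j : ℕ) (ω : Ω) : V :=
  ∑ i : Fin m, Z (j * m + i) ω

lemma sum_range_succ_mul_eq_add_blockSum (Z : ℕ → Ω → V) (m j : ℕ) (ω : Ω) :
    ∑ i ∈ Finset.range ((j + 1) * m), Z i ω =
      ∑ i ∈ Finset.range (j * m), Z i ω + blockSum Z m j ω := by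
  rw [blockSum, Fin.sum_univ_eq_sum_range (fun i => Z (j * m + i) ω), add_one_mul,
    Finset.sum_range_add]

variable [MeasurableSpace Ω] {P : Measure Ω} [MeasurableSpace V] [MeasurableAdd₂ V]
  {Z : ℕ → Ω → V}

lemma measurable_blockSum (hZ : ∀ n, Measurable (Z n)) (m j : ℕ) : Measurable (blockSum Z m j) :=
  Finset.measurable_fun_sum _ fun _ _ => hZ _

lemma iIndepFun_blockSum (hZ : ∀ n, Measurable (Z n)) (hindep : iIndepFun Z P) (m : ℕ) :
    iIndepFun (blockSum Z m) P :=
  (iIndepFun_curry (Y := fun j (i : Fin m) => Z (j * m + i)) (fun _ _ => hZ _)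
    (hindep.precomp (injective_blockIndex m))).comp (fun _ x => ∑ i, x i)
    fun _ => Finset.measurable_fun_sum _ fun i _ => measurable_pi_apply i

end BlockSum

section NormBlockSum

variable {Ω V : Type*} [SeminormedAddCommGroup V] {Z : ℕ → Ω → V}

lemma norm_blockSum_le_of_lt_exitTime {R : ℝ} {m k : ℕ} {ω : Ω}
    (hlt : ((k * m : ℕ) : ℝ≥0∞) < exitTime Z (Metric.closedBall 0 R) ω) (hR : 0 ≤ R) {j : ℕ}
    (hj : j < k) : ‖blockSum Z m j ω‖ ≤ 2 * R := by
  have hwalk (i : ℕ) (hi : i ≤ k) : ‖∑ l ∈ Finset.range (i * m), Z l ω‖ ≤ R := by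
    rcases Nat.eq_zero_or_pos (i * m) with h0 | hpos
    · simpa [h0] using hR
    · have hle : ((i * m : ℕ) : ℝ≥0∞) ≤ (k * m : ℕ) := by gcongr
      simpa using sum_range_mem_of_lt_exitTime hpos (hle.trans_lt hlt)
  have hincrement : blockSum Z m j ω =
      ∑ i ∈ Finset.range ((j + 1) * m), Z i ω - ∑ i ∈ Finset.range (j * m), Z i ω := by
    rw [sum_range_succ_mul_eq_add_blockSum, add_sub_cancel_left]
  calc ‖blockSum Z m j ω‖ ≤ R + R := by
        rw [hincrement]
        exact (norm_sub_le _ _).trans (add_le_add (hwalk _ hj) (hwalk _ hj.le))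
    _ = 2 * R := (two_mul R).symm

variable [MeasurableSpace Ω] {P : Measure Ω} [MeasurableSpace V] [BorelSpace V]
  [SecondCountableTopology V]

lemma measure_lt_exitTime_closedBall_le_pow (hZ : ∀ n, Measurable (Z n))
    (hindep : iIndepFun Z P) {R : ℝ} (hR : 0 ≤ R) {m : ℕ} {q : ℝ≥0∞}
    (hq : ∀ j, P {ω | ‖blockSum Z m j ω‖ ≤ 2 * R} ≤ q) (k : ℕ) :
    P {ω | ((k * m : ℕ) : ℝ≥0∞) < exitTime Z (Metric.closedBall 0 R) ω} ≤ q ^ k :=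
  calc P {ω | ((k * m : ℕ) : ℝ≥0∞) < exitTime Z (Metric.closedBall 0 R) ω}
      ≤ P (⋂ j ∈ Finset.range k, blockSum Z m j ⁻¹' {x | ‖x‖ ≤ 2 * R}) :=
        measure_mono fun ω hω => Set.mem_iInter₂.2 fun j hj =>
          norm_blockSum_le_of_lt_exitTime hω hR (Finset.mem_range.1 hj)
    _ = ∏ j ∈ Finset.range k, P (blockSum Z m j ⁻¹' {x | ‖x‖ ≤ 2 * R}) :=
        (iIndepFun_blockSum hZ hindep m).measure_inter_preimage_eq_mul _
          (fun _ _ => measurableSet_le continuous_norm.measurable measurable_const)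
    _ ≤ q ^ k := by simpa using Finset.prod_le_pow_card (Finset.range k) _ q fun j _ => hq j

end NormBlockSum

section SteinLemma

lemma card_mul_half_norm_le_norm_sum {ι V : Type*} [SeminormedAddCommGroup V] [NormedSpace ℝ V]
    (t : Finset ι) {x : ι → V} {v : V} (hx : ∀ i ∈ t, ‖x i - v‖ ≤ ‖v‖ / 2) :
    t.card * (‖v‖ / 2) ≤ ‖∑ i ∈ t, x i‖ := by
  have hdev : ‖∑ i ∈ t, x i - t.card • v‖ ≤ t.card * (‖v‖ / 2) := by
    rw [← Finset.sum_const, ← Finset.sum_sub_distrib, ← nsmul_eq_mul]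
    exact norm_sum_le_of_le _ hx |>.trans_eq (by simp)
  have hmain : ‖t.card • v‖ = t.card * ‖v‖ := by
    rw [← Nat.cast_smul_eq_nsmul ℝ, norm_smul, Real.norm_natCast]
  have htri := norm_sub_norm_le (t.card • v) (∑ i ∈ t, x i)
  rw [norm_sub_rev] at htri
  linarith

variable {Ω V : Type*} [MeasurableSpace Ω] {P : Measure Ω} [NormedAddCommGroup V]
  [MeasurableSpace V] [BorelSpace V] [SecondCountableTopology V]

lemma exists_measure_preimage_ball_ne_zero {Y : Ω → V} (hY : Measurable Y)
    (hne : P {ω | Y ω ≠ 0} ≠ 0) : ∃ v ≠ 0, P (Y ⁻¹' Metric.ball v (‖v‖ / 2)) ≠ 0 := by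
  have hmap : P.map Y {0}ᶜ ≠ 0 := by
    rwa [Measure.map_apply hY (measurableSet_singleton 0).compl]
  obtain ⟨v, hv, hpos⟩ := exists_mem_forall_mem_nhdsWithin_pos_measure hmap
  have hball := hpos _ (mem_nhdsWithin_of_mem_nhds
    (Metric.ball_mem_nhds v (half_pos (norm_pos_iff.2 hv))))
  rw [Measure.map_apply hY Metric.isOpen_ball.measurableSet] at hball
  exact ⟨v, hv, hball.ne'⟩

variable [NormedSpace ℝ V] {Z : ℕ → Ω → V}

lemma measure_norm_blockSum_le_one_sub_pow (hZ : ∀ n, Measurable (Z n)) (hindep : iIndepFun Z P)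
    (hident : ∀ n, IdentDistrib (Z n) (Z 0) P P) {v : V} {m : ℕ} {D : ℝ}
    (hD : D < m * (‖v‖ / 2)) (j : ℕ) :
    P {ω | ‖blockSum Z m j ω‖ ≤ D} ≤ 1 - P (Z 0 ⁻¹' Metric.ball v (‖v‖ / 2)) ^ m := by
  have := hindep.isProbabilityMeasure
  have hmeas : MeasurableSet {ω | D < ‖blockSum Z m j ω‖} :=
    measurableSet_lt measurable_const (measurable_blockSum hZ m j).norm
  have hinj : Function.Injective fun i : Fin m => j * m + (i : ℕ) :=
    (injective_blockIndex m).comp (Prod.mk_right_injective j)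
  have hlarge : P (Z 0 ⁻¹' Metric.ball v (‖v‖ / 2)) ^ m ≤ P {ω | D < ‖blockSum Z m j ω‖} :=
    calc P (Z 0 ⁻¹' Metric.ball v (‖v‖ / 2)) ^ m
        = ∏ i : Fin m, P (Z (j * m + i) ⁻¹' Metric.ball v (‖v‖ / 2)) := by
          simp [(hident _).measure_mem_eq Metric.isOpen_ball.measurableSet]
      _ = P (⋂ i ∈ Finset.univ, Z (j * m + (i : Fin m)) ⁻¹' Metric.ball v (‖v‖ / 2)) :=
          ((hindep.precomp hinj).measure_inter_preimage_eq_mul Finset.univ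
            fun _ _ => Metric.isOpen_ball.measurableSet).symm
      _ ≤ P {ω | D < ‖blockSum Z m j ω‖} := by
          refine measure_mono fun ω hω => hD.trans_le ?_
          simpa [blockSum] using card_mul_half_norm_le_norm_sum Finset.univ fun i hi =>
            (mem_ball_iff_norm.1 (Set.mem_iInter₂.1 hω i hi)).le
  calc P {ω | ‖blockSum Z m j ω‖ ≤ D} = 1 - P {ω | D < ‖blockSum Z m j ω‖} := by
        rw [← prob_compl_eq_one_sub hmeas]
        simp only [Set.compl_ofPred, not_lt]
    _ ≤ _ := tsub_le_tsub_left hlarge 1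

lemma exists_measure_lt_exitTime_closedBall_le_pow (hZ : ∀ n, Measurable (Z n))
    (hindep : iIndepFun Z P) (hident : ∀ n, IdentDistrib (Z n) (Z 0) P P)
    (hne : P {ω | Z 0 ω ≠ 0} ≠ 0) {R : ℝ} (hR : 0 ≤ R) :
    ∃ m ≠ 0, ∃ q < 1, ∀ k : ℕ,
      P {ω | ((k * m : ℕ) : ℝ≥0∞) < exitTime Z (Metric.closedBall 0 R) ω} ≤ q ^ k := by
  obtain ⟨v, hv, hball⟩ := exists_measure_preimage_ball_ne_zero (hZ 0) hne
  obtain ⟨m, hm⟩ := exists_nat_gt (2 * R / (‖v‖ / 2))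
  have hhalf : 0 < ‖v‖ / 2 := half_pos (norm_pos_iff.2 hv)
  have hmpos : (0 : ℝ) < m := (by positivity : 0 ≤ 2 * R / (‖v‖ / 2)).trans_lt hm
  exact ⟨m, Nat.cast_ne_zero.1 hmpos.ne', 1 - P (Z 0 ⁻¹' Metric.ball v (‖v‖ / 2)) ^ m,
    ENNReal.sub_lt_self ENNReal.one_ne_top one_ne_zero (pow_ne_zero m hball),
    measure_lt_exitTime_closedBall_le_pow hZ hindep hR
      (measure_norm_blockSum_le_one_sub_pow hZ hindep hident ((div_lt_iff₀ hhalf).1 hm))⟩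

lemma lintegral_exitTime_closedBall_pow_lt_top (hZ : ∀ n, Measurable (Z n))
    (hindep : iIndepFun Z P) (hident : ∀ n, IdentDistrib (Z n) (Z 0) P P)
    (hne : P {ω | Z 0 ω ≠ 0} ≠ 0) {R : ℝ} (hR : 0 ≤ R) {N : ℕ} (hN : N ≠ 0) :
    ∫⁻ ω, exitTime Z (Metric.closedBall 0 R) ω ^ N ∂P < ⊤ := by
  obtain ⟨m, hm, q, hq, htail⟩ :=
    exists_measure_lt_exitTime_closedBall_le_pow hZ hindep hident hne hR
  set T := exitTime Z (Metric.closedBall 0 R)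
  have hm0 : (m : ℝ≥0∞) ≠ 0 := Nat.cast_ne_zero.2 hm
  have hmtop : (m : ℝ≥0∞) ≠ ⊤ := ENNReal.natCast_ne_top m
  have hT : Measurable T := measurable_exitTime hZ Metric.isClosed_closedBall.measurableSet
  have hscaled : ∫⁻ ω, (T ω / m) ^ N ∂P < ⊤ := by
    refine lintegral_pow_lt_top_of_geometric_tail (hT.div_const _) hq (fun k => ?_) hN
    simpa only [ENNReal.lt_div_iff_mul_lt (.inl hm0) (.inl hmtop), ← Nat.cast_mul] using htail k
  calc ∫⁻ ω, T ω ^ N ∂P = (m : ℝ≥0∞) ^ N * ∫⁻ ω, (T ω / m) ^ N ∂P := by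
        rw [← lintegral_const_mul _ ((hT.div_const _).pow_const N)]
        simp_rw [← mul_pow, ENNReal.mul_div_cancel hm0 hmtop]
    _ < ⊤ := ENNReal.mul_lt_top (ENNReal.pow_lt_top hmtop.lt_top) hscaled

theorem lintegral_exitTime_rpow_lt_top (hZ : ∀ n, Measurable (Z n)) (hindep : iIndepFun Z P)
    (hident : ∀ n, IdentDistrib (Z n) (Z 0) P P) (hne : P {ω | Z 0 ω ≠ 0} ≠ 0) {s : Set V}
    (hs : Bornology.IsBounded s) (r : ℝ) : ∫⁻ ω, exitTime Z s ω ^ r ∂P < ⊤ := by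
  obtain ⟨R, hR, hsR⟩ := hs.subset_closedBall_lt 0 0
  refine lt_of_le_of_lt (lintegral_mono fun ω => ?_) <|
    lintegral_exitTime_closedBall_pow_lt_top hZ hindep hident hne hR.le ⌈r⌉₊.succ_ne_zero
  calc exitTime Z s ω ^ r ≤ exitTime Z s ω ^ ((⌈r⌉₊ + 1 : ℕ) : ℝ) :=
        ENNReal.rpow_le_rpow_of_exponent_le (one_le_exitTime ω)
          ((Nat.le_ceil r).trans (by simp))
    _ = exitTime Z s ω ^ (⌈r⌉₊ + 1) := ENNReal.rpow_natCast _ _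
    _ ≤ exitTime Z (Metric.closedBall 0 R) ω ^ (⌈r⌉₊ + 1) :=
        pow_le_pow_left' (exitTime_mono hsR ω) _

end SteinLemma

section LikelihoodRatio

variable {E : Type*} [MeasurableSpace E] {ν : Measure E} {f g : E → ℝ}

lemma not_ae_eq_of_integral_mul_log_div_ne_zero
    (hI : ∫ t, g t * Real.log (g t / f t) ∂ν ≠ 0) : ¬ f =ᵐ[ν] g := by
  intro hfg
  refine hI (integral_eq_zero_of_ae ?_)
  filter_upwards [hfg] with t ht
  rcases eq_or_ne (g t) 0 with h0 | h0 <;> simp [ht, h0]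

lemma measure_log_div_ne_zero {μ : Measure E} (hνμ : ν ≪ μ) (hfpos : ∀ᵐ t ∂ν, 0 < f t)
    (hgpos : ∀ᵐ t ∂ν, 0 < g t) (hfg : ¬ f =ᵐ[ν] g) : μ {t | Real.log (g t / f t) ≠ 0} ≠ 0 := by
  intro hzero
  refine hfg ?_
  filter_upwards [hfpos, hgpos, measure_eq_zero_iff_ae_notMem.1 (hνμ hzero)] with t hft hgt hlog
  have hratio : g t / f t = 1 :=
    Real.eq_one_of_pos_of_log_eq_zero (div_pos hgt hft) (not_not.1 hlog)
  exact ((div_eq_one_iff_eq hft.ne').1 hratio).symm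

end LikelihoodRatio

theorem stmt_15_general
    {Ω : Type*} [MeasurableSpace Ω] {P : Measure Ω}
    {E : Type*} [MeasurableSpace E] {ν : Measure E}
    {f g p : E → ℝ} (hf : Measurable f) (hg : Measurable g) (hp : Measurable p)
    (hfpos : ∀ᵐ t ∂ν, 0 < f t) (hgpos : ∀ᵐ t ∂ν, 0 < g t) (hppos : ∀ᵐ t ∂ν, 0 < p t)
    (hfg : ¬ f =ᵐ[ν] g)
    {X : ℕ → Ω → E} (hX : ∀ n, Measurable (X n)) (hindep : iIndepFun X P)
    (hdist : ∀ n, P.map (X n) = ν.withDensity fun t => ENNReal.ofReal (p t))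
    {s : Set ℝ} (hs : Bornology.IsBounded s) (r : ℝ) :
    ∫⁻ ω, exitTime (fun m ω => Real.log (g (X m ω) / f (X m ω))) s ω ^ r ∂P < ⊤ := by
  have hlog : Measurable fun t => Real.log (g t / f t) := (hg.div hf).log
  have hident (n : ℕ) : IdentDistrib (X n) (X 0) P P :=
    ⟨(hX n).aemeasurable, (hX 0).aemeasurable, by rw [hdist, hdist]⟩
  have hac : ν ≪ P.map (X 0) := by
    rw [hdist]
    exact withDensity_absolutelyContinuous' hp.ennreal_ofReal.aemeasurable
      (hppos.mono fun t ht => (ENNReal.ofReal_pos.2 ht).ne')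
  have hne : P {ω | Real.log (g (X 0 ω) / f (X 0 ω)) ≠ 0} ≠ 0 := by
    have hlaw := Measure.map_apply (μ := P) (hX 0) (hlog (measurableSet_singleton 0).compl)
    exact hlaw.symm.trans_ne (measure_log_div_ne_zero hac hfpos hgpos hfg)
  exact lintegral_exitTime_rpow_lt_top (fun n => hlog.comp (hX n))
    (hindep.comp (fun _ => _) fun _ => hlog) (fun n => (hident n).comp hlog) hne hs r

/-- Finite moments of the SPRT stopping time `T = inf{n ≥ 1 : λ(n) ∉ (-b, a)}`
(an element of `[0,∞]`, with `inf ∅ = ∞`): if `I = ∫ g log(g/f) dν ∈ (0,∞)` then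
`E_g[T^r] < ∞` for every `r ≥ 1`, and if `J = ∫ f log(f/g) dν ∈ (0,∞)` then
`E_f[T^r] < ∞` for every `r ≥ 1`. -/
theorem stmt_15
    {Ω : Type*} [MeasurableSpace Ω] (Pf Pg : Measure Ω)
    [IsProbabilityMeasure Pf] [IsProbabilityMeasure Pg]
    {E : Type*} [mE : MeasurableSpace E] (ν : Measure E) [SigmaFinite ν]
    (f g : E → ℝ) (hf : Measurable f) (hg : Measurable g)
    (hfpos : ∀ᵐ t ∂ν, 0 < f t) (hgpos : ∀ᵐ t ∂ν, 0 < g t)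
    (hfprob : ∫ t, f t ∂ν = 1) (hgprob : ∫ t, g t ∂ν = 1)
    (X : ℕ → Ω → E) (hX : ∀ n, Measurable (X n))
    (hindep_f : iIndepFun X Pf)
    (hdist_f : ∀ n, Pf.map (X n) = ν.withDensity fun t => ENNReal.ofReal (f t))
    (hindep_g : iIndepFun X Pg)
    (hdist_g : ∀ n, Pg.map (X n) = ν.withDensity fun t => ENNReal.ofReal (g t))
    (a b : ℝ) (ha : 0 < a) (hb : 0 < b) :
    let T : Ω → ℝ≥0∞ := fun ω =>
      sInf {t : ℝ≥0∞ | ∃ n : ℕ, 1 ≤ n ∧ t = n ∧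
        (∑ m ∈ Finset.range n, Real.log (g (X m ω) / f (X m ω))) ∉ Set.Ioo (-b) a}
    ((Integrable (fun t => g t * Real.log (g t / f t)) ν ∧
        0 < ∫ t, g t * Real.log (g t / f t) ∂ν) →
      ∀ r : ℝ, 1 ≤ r → ∫⁻ ω, T ω ^ r ∂Pg < ⊤) ∧
    ((Integrable (fun t => f t * Real.log (f t / g t)) ν ∧
        0 < ∫ t, f t * Real.log (f t / g t) ∂ν) →
      ∀ r : ℝ, 1 ≤ r → ∫⁻ ω, T ω ^ r ∂Pf < ⊤) := by
  intro T
  exact ⟨fun ⟨_, hI⟩ r _ => stmt_15_general hf hg hg hfpos hgpos hgpos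
      (not_ae_eq_of_integral_mul_log_div_ne_zero hI.ne') hX hindep_g hdist_g
      (Metric.isBounded_Ioo _ _) r,
    fun ⟨_, hJ⟩ r _ => stmt_15_general hf hg hf hfpos hgpos hfpos
      (fun hfg => not_ae_eq_of_integral_mul_log_div_ne_zero hJ.ne' hfg.symm) hX hindep_f hdist_f
      (Metric.isBounded_Ioo _ _) r⟩
end
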